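/- arXiv:math/0403034 — 9 statements merged into one kernel-verified Lean document; each statement's English description precedes it below -/
import Mathlib

section
/- Let Ω ⊆ ℂ be an open set, let x₀, x₁ ∈ Ω, and let f be a holomorphic function on an open disk D₀ ⊆ Ω centered at x₀. Then the set of germs of holomorphic functions at x₁ that are obtained from f by analytic continuation along a chain of disks in Ω is countable. -/
open Filter Metric Set

/-- A germ `g` of holomorphic function at `x₁` is obtained from the holomorphic function `f`
(given on the open disk `D₀ ⊆ Ω`) by analytic continuation along a chain of open disks
contained in `Ω`. -/
def ContinuationGerm (Ω : Set ℂ) (f : ℂ → ℂ) (D₀ : Set ℂ) (x₁ : ℂ)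
    (g : Filter.Germ (nhds x₁) ℂ) : Prop :=
  ∃ (n : ℕ) (D : Fin (n + 1) → Set ℂ) (F : Fin (n + 1) → ℂ → ℂ),
    D 0 = D₀ ∧ Set.EqOn (F 0) f D₀ ∧
    (∀ k, (∃ c : ℂ, ∃ r : ℝ, 0 < r ∧ D k = Metric.ball c r) ∧ D k ⊆ Ω ∧
      DifferentiableOn ℂ (F k) (D k)) ∧
    (∀ k : Fin n, (D k.castSucc ∩ D k.succ).Nonempty ∧
      Set.EqOn (F k.castSucc) (F k.succ) (D k.castSucc ∩ D k.succ)) ∧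
    x₁ ∈ D (Fin.last n) ∧ g = ↑(F (Fin.last n))

/-! Choose the points of a chain's consecutive overlaps in a countable dense set. By the identity
theorem, two chains with the same chosen points carry the same germ at the end: agreement of the
`k`-th functions spreads through the chosen point to the `(k + 1)`-st. Only countably many finite
sequences of points occur. -/

section Continuation

open Topology TopologicalSpace

variable (𝕜 : Type*) {E F : Type*} [NontriviallyNormedField 𝕜]
  [NormedAddCommGroup E] [NormedSpace 𝕜 E] [NormedAddCommGroup F] [NormedSpace 𝕜 F]

/-- A chain of analytic continuations of `f`, given on `D₀`, through domains from a family `𝓓`: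
the function `G k` lives on `D k` and its values elsewhere are irrelevant. -/
structure AnalyticChain (𝓓 : Set (Set E)) (f : E → F) (D₀ : Set E) {n : ℕ}
    (D : Fin (n + 1) → Set E) (G : Fin (n + 1) → E → F) : Prop where
  domain_zero : D 0 = D₀
  eqOn_zero : EqOn (G 0) f D₀
  domain_mem (k : Fin (n + 1)) : D k ∈ 𝓓
  analyticOnNhd (k : Fin (n + 1)) : AnalyticOnNhd 𝕜 (G k) (D k)
  inter_nonempty (k : Fin n) : (D k.castSucc ∩ D k.succ).Nonempty
  eqOn_inter (k : Fin n) : EqOn (G k.castSucc) (G k.succ) (D k.castSucc ∩ D k.succ)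

/-- The germs at `x` obtained from `f : D₀ → F` by analytic continuation along chains of domains
from `𝓓`; this is `ContinuationGerm` with the disks in `Ω` replaced by an arbitrary family. -/
def continuationGerms (𝓓 : Set (Set E)) (f : E → F) (D₀ : Set E) (x : E) :
    Set (Germ (𝓝 x) F) :=
  {g | ∃ (n : ℕ) (D : Fin (n + 1) → Set E) (G : Fin (n + 1) → E → F),
    AnalyticChain 𝕜 𝓓 f D₀ D G ∧ x ∈ D (Fin.last n) ∧ g = ↑(G (Fin.last n))}

/-- The germs in `continuationGerms` that come from chains of length `n` whose `k`-th overlap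
contains the prescribed point `p k`; the points serve as a code for the chain. -/
def continuationGermsThrough (𝓓 : Set (Set E)) (f : E → F) (D₀ : Set E) (x : E) {n : ℕ}
    (p : Fin n → E) : Set (Germ (𝓝 x) F) :=
  {g | ∃ (D : Fin (n + 1) → Set E) (G : Fin (n + 1) → E → F),
    AnalyticChain 𝕜 𝓓 f D₀ D G ∧ (∀ k : Fin n, p k ∈ D k.castSucc ∩ D k.succ) ∧
      x ∈ D (Fin.last n) ∧ g = ↑(G (Fin.last n))}

variable {𝕜} {𝓓 : Set (Set E)} {f : E → F} {D₀ : Set E}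

theorem AnalyticChain.eqOn_inter_of_mem
    (h_open : ∀ U ∈ 𝓓, IsOpen U) (h_inter : ∀ U ∈ 𝓓, ∀ V ∈ 𝓓, IsPreconnected (U ∩ V))
    {n : ℕ} {p : Fin n → E} {D D' : Fin (n + 1) → Set E} {G G' : Fin (n + 1) → E → F}
    (hG : AnalyticChain 𝕜 𝓓 f D₀ D G) (hG' : AnalyticChain 𝕜 𝓓 f D₀ D' G')
    (hp : ∀ k : Fin n, p k ∈ D k.castSucc ∩ D k.succ)
    (hp' : ∀ k : Fin n, p k ∈ D' k.castSucc ∩ D' k.succ) (k : Fin (n + 1)) :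
    EqOn (G k) (G' k) (D k ∩ D' k) := by
  induction k using Fin.induction with
  | zero =>
    rw [hG.domain_zero, hG'.domain_zero, inter_self]
    exact hG.eqOn_zero.trans hG'.eqOn_zero.symm
  | succ k ih =>
    have overlap_mem_nhds : D k.castSucc ∩ D k.succ ∈ 𝓝 (p k) :=
      ((h_open _ (hG.domain_mem _)).inter (h_open _ (hG.domain_mem _))).mem_nhds (hp k)
    have overlap_mem_nhds' : D' k.castSucc ∩ D' k.succ ∈ 𝓝 (p k) :=
      ((h_open _ (hG'.domain_mem _)).inter (h_open _ (hG'.domain_mem _))).mem_nhds (hp' k)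
    have eventuallyEq : G k.succ =ᶠ[𝓝 (p k)] G' k.succ := by
      filter_upwards [overlap_mem_nhds, overlap_mem_nhds'] with z hz hz'
      calc G k.succ z = G k.castSucc z := (hG.eqOn_inter k hz).symm
        _ = G' k.castSucc z := ih ⟨hz.1, hz'.1⟩
        _ = G' k.succ z := hG'.eqOn_inter k hz'
    exact ((hG.analyticOnNhd _).mono inter_subset_left).eqOn_of_preconnected_of_eventuallyEq
      ((hG'.analyticOnNhd _).mono inter_subset_right)
      (h_inter _ (hG.domain_mem _) _ (hG'.domain_mem _)) ⟨(hp k).2, (hp' k).2⟩ eventuallyEq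

theorem subsingleton_continuationGermsThrough
    (h_open : ∀ U ∈ 𝓓, IsOpen U) (h_inter : ∀ U ∈ 𝓓, ∀ V ∈ 𝓓, IsPreconnected (U ∩ V))
    (x : E) {n : ℕ} (p : Fin n → E) :
    (continuationGermsThrough 𝕜 𝓓 f D₀ x p).Subsingleton := by
  rintro _ ⟨D, G, hG, hp, hx, rfl⟩ _ ⟨D', G', hG', hp', hx', rfl⟩
  have mem_nhds : D (Fin.last n) ∩ D' (Fin.last n) ∈ 𝓝 x :=
    ((h_open _ (hG.domain_mem _)).inter (h_open _ (hG'.domain_mem _))).mem_nhds ⟨hx, hx'⟩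
  exact Germ.coe_eq.2 <|
    (hG.eqOn_inter_of_mem h_open h_inter hG' hp hp' (Fin.last n)).eventuallyEq_of_mem mem_nhds

theorem continuationGerms_subset_iUnion_through (h_open : ∀ U ∈ 𝓓, IsOpen U)
    {ι : Type*} {u : ι → E} (hu : DenseRange u) (x : E) :
    continuationGerms 𝕜 𝓓 f D₀ x ⊆
      ⋃ (n : ℕ) (a : Fin n → ι), continuationGermsThrough 𝕜 𝓓 f D₀ x (u ∘ a) := by
  rintro g ⟨n, D, G, hG, hx, hg⟩
  have exists_mem_overlap (k : Fin n) : ∃ i, u i ∈ D k.castSucc ∩ D k.succ :=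
    hu.exists_mem_open ((h_open _ (hG.domain_mem _)).inter (h_open _ (hG.domain_mem _)))
      (hG.inter_nonempty k)
  choose a ha using exists_mem_overlap
  exact mem_iUnion₂.2 ⟨n, a, D, G, hG, ha, hx, hg⟩

variable (𝕜) in
theorem poincare_volterra_general [SeparableSpace E]
    (h_open : ∀ U ∈ 𝓓, IsOpen U) (h_inter : ∀ U ∈ 𝓓, ∀ V ∈ 𝓓, IsPreconnected (U ∩ V))
    (f : E → F) (D₀ : Set E) (x : E) : (continuationGerms 𝕜 𝓓 f D₀ x).Countable := by
  refine Countable.mono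
    (continuationGerms_subset_iUnion_through h_open (denseRange_denseSeq E) x) ?_
  exact countable_iUnion fun n ↦ countable_iUnion fun a ↦
    (subsingleton_continuationGermsThrough h_open h_inter x (denseSeq E ∘ a)).countable

end Continuation

/-- The open disks of positive radius contained in `Ω`: the family of domains that
`ContinuationGerm` allows. -/
def disksIn (Ω : Set ℂ) : Set (Set ℂ) :=
  {U | (∃ c : ℂ, ∃ r : ℝ, 0 < r ∧ U = ball c r) ∧ U ⊆ Ω}

theorem isOpen_of_mem_disksIn {Ω U : Set ℂ} (hU : U ∈ disksIn Ω) : IsOpen U := by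
  obtain ⟨⟨c, r, -, rfl⟩, -⟩ := hU
  exact isOpen_ball

theorem isPreconnected_inter_of_mem_disksIn {Ω U V : Set ℂ} (hU : U ∈ disksIn Ω)
    (hV : V ∈ disksIn Ω) : IsPreconnected (U ∩ V) := by
  obtain ⟨⟨c, r, -, rfl⟩, -⟩ := hU
  obtain ⟨⟨d, s, -, rfl⟩, -⟩ := hV
  exact ((convex_ball c r).inter (convex_ball d s)).isPreconnected

theorem ContinuationGerm.mem_continuationGerms {Ω D₀ : Set ℂ} {f : ℂ → ℂ} {x : ℂ}
    {g : Germ (nhds x) ℂ} (hg : ContinuationGerm Ω f D₀ x g) :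
    g ∈ continuationGerms ℂ (disksIn Ω) f D₀ x := by
  obtain ⟨n, D, G, h_zero, h_eqOn, h_disk, h_step, hx, rfl⟩ := hg
  have domain_mem (k : Fin (n + 1)) : D k ∈ disksIn Ω := ⟨(h_disk k).1, (h_disk k).2.1⟩
  refine ⟨n, D, G, ?_, hx, rfl⟩
  exact {
    domain_zero := h_zero
    eqOn_zero := h_eqOn
    domain_mem := domain_mem
    analyticOnNhd k := (h_disk k).2.2.analyticOnNhd (isOpen_of_mem_disksIn (domain_mem k))
    inter_nonempty k := (h_step k).1
    eqOn_inter k := (h_step k).2 }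

/-- **Poincaré–Volterra lemma**: the set of germs at `x₁` obtained from `f` by analytic
continuation along chains of disks in `Ω` is countable. -/
theorem poincare_volterra (Ω : Set ℂ) (hΩ : IsOpen Ω) (x₀ x₁ : ℂ)
    (hx₀ : x₀ ∈ Ω) (hx₁ : x₁ ∈ Ω) (r : ℝ) (hr : 0 < r)
    (hD₀ : Metric.ball x₀ r ⊆ Ω) (f : ℂ → ℂ)
    (hf : DifferentiableOn ℂ f (Metric.ball x₀ r)) :
    {g : Filter.Germ (nhds x₁) ℂ |
      ContinuationGerm Ω f (Metric.ball x₀ r) x₁ g}.Countable := by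
  exact (poincare_volterra_general ℂ (fun _ ↦ isOpen_of_mem_disksIn)
    (fun _ hU _ hV ↦ isPreconnected_inter_of_mem_disksIn hU hV) f (ball x₀ r) x₁).mono
    fun _ ↦ ContinuationGerm.mem_continuationGerms
end

section
/- Let P, Q be nonzero polynomials in two variables over ℂ having no common non-unit factor (every common divisor of P and Q is a unit). Then the set {(x,y) ∈ ℂ² : P(x,y) = 0 and Q(x,y) = 0} of their common zeros is finite. -/
/-!
By Gauss's lemma, `P` and `Q` remain coprime in `ℂ(X)[Y]`. Clearing denominators in a Bézout
identity over `ℂ(X)` gives a nonzero `r ∈ ℂ[X]` in the ideal `(P, Q)`, so the common zeros lie over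
the finitely many roots of `r`. Over each root `x` there are finitely many of them, since otherwise
`P(x, ·)` and `Q(x, ·)` would both be zero, making `X - x` a common factor of `P` and `Q`.
-/

/-- Evaluation of a bivariate polynomial `P ∈ ℂ[X][Y]` at a point `(x, y) ∈ ℂ²`:
`(x, y) ↦ Σ_j p_j(x) y^j` where the `p_j ∈ ℂ[X]` are the coefficients of `P`
as a polynomial in `Y`. -/
noncomputable def evalXY (P : Polynomial (Polynomial ℂ)) (x y : ℂ) : ℂ :=
  (P.map (Polynomial.evalRingHom x)).eval y

open Polynomial
open scoped Polynomial.Bivariate nonZeroDivisors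

theorem exists_isPrimitive_associated_map {R K : Type*} [CommRing R] [IsDomain R] [IsGCDMonoid R]
    [Field K] [Algebra R K] [IsFractionRing R K] {p : K[X]} (hp : p ≠ 0) :
    ∃ q : R[X], q.IsPrimitive ∧ Associated (q.map (algebraMap R K)) p := by
  let : NormalizedGCDMonoid R := Nonempty.some inferInstance
  obtain ⟨b, hb, hbp⟩ := IsLocalization.integerNormalization_spec R⁰ p
  set q := IsLocalization.integerNormalization R⁰ p
  have hq_ne_zero : q ≠ 0 :=
    (IsLocalization.integerNormalization_eq_zero_iff le_rfl p).not.mpr hp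
  have associated_C_mul {a : R} (ha : a ≠ 0) (f : K[X]) :
      Associated (C (algebraMap R K a) * f) f :=
    associated_unit_mul_left f _ <| isUnit_C.mpr <| IsUnit.mk0 _ <|
      ((FaithfulSMul.algebraMap_injective R K).ne_iff' (map_zero _)).mpr ha
  refine ⟨q.primPart, q.isPrimitive_primPart, ?_⟩
  have hcontent : C (algebraMap R K q.content) * q.primPart.map (algebraMap R K) =
      C (algebraMap R K b) * p := by
    rw [← map_C, ← Polynomial.map_mul, ← q.eq_C_content_mul_primPart, hbp, Algebra.smul_def,
      Polynomial.algebraMap_apply]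
  exact (associated_C_mul (content_eq_zero_iff.not.mpr hq_ne_zero) _).symm.trans
    (hcontent ▸ associated_C_mul (nonZeroDivisors.ne_zero hb) p)

theorem isRelPrime_map_algebraMap {R : Type*} (K : Type*) [CommRing R] [IsDomain R]
    [IsGCDMonoid R] [Field K] [Algebra R K] [IsFractionRing R K] {p q : R[X]}
    (h : IsRelPrime p q) :
    IsRelPrime (p.map (algebraMap R K)) (q.map (algebraMap R K)) := by
  intro d hdp hdq
  have hd : d ≠ 0 := by
    rintro rfl
    have map_eq_zero {f : R[X]} (hf : 0 ∣ f.map (algebraMap R K)) : f = 0 :=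
      (Polynomial.map_eq_zero_iff (FaithfulSMul.algebraMap_injective R K)).mp
        (zero_dvd_iff.mp hf)
    exact h.ne_zero_or_ne_zero.elim (· (map_eq_zero hdp)) (· (map_eq_zero hdq))
  obtain ⟨e, he, hed⟩ := exists_isPrimitive_associated_map (R := R) hd
  have he_unit : IsUnit e :=
    h (he.dvd_of_fraction_map_dvd_fraction_map (hed.dvd.trans hdp))
      (he.dvd_of_fraction_map_dvd_fraction_map (hed.dvd.trans hdq))
  exact hed.isUnit (he_unit.map (mapRingHom (algebraMap R K)))

theorem exists_C_mem_span_pair_of_isCoprime_map {R S : Type*} [CommRing R] [CommRing S]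
    [Algebra R S] (M : Submonoid R) [IsLocalization M S] {p q : R[X]}
    (h : IsCoprime (p.map (algebraMap R S)) (q.map (algebraMap R S))) :
    ∃ r ∈ M, C r ∈ Ideal.span {p, q} := by
  let : Algebra R[X] S[X] := Polynomial.algebra R S
  have : IsLocalization (M.map C) S[X] := Polynomial.isLocalization M S
  have hmap : (Ideal.span {p, q}).map (algebraMap R[X] S[X]) = ⊤ := by
    rw [Ideal.map_span, Set.image_pair, Ideal.eq_top_iff_one, Ideal.mem_span_pair]
    exact h
  have hmeet : ¬ Disjoint (M.map C : Set R[X]) (Ideal.span {p, q} : Set R[X]) := fun hdisj ↦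
    (IsLocalization.map_algebraMap_ne_top_iff_disjoint (M.map C) S[X] _).mpr hdisj hmap
  obtain ⟨_, ⟨r, hr, rfl⟩, hmem⟩ := Set.not_disjoint_iff.mp hmeet
  exact ⟨r, hr, hmem⟩

theorem exists_ne_zero_C_mem_span_pair {R : Type*} [CommRing R] [IsDomain R] [IsGCDMonoid R]
    {p q : R[X]} (h : IsRelPrime p q) : ∃ r ≠ 0, C r ∈ Ideal.span {p, q} := by
  obtain ⟨r, hr, hmem⟩ := exists_C_mem_span_pair_of_isCoprime_map R⁰
    (isRelPrime_map_algebraMap (FractionRing R) h).isCoprime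
  exact ⟨r, nonZeroDivisors.ne_zero hr, hmem⟩

theorem evalEval_eq_zero_of_mem_span_pair {R : Type*} [CommRing R] {P Q F : R[X][Y]} {x y : R}
    (hP : P.evalEval x y = 0) (hQ : Q.evalEval x y = 0) (hF : F ∈ Ideal.span {P, Q}) :
    F.evalEval x y = 0 := by
  obtain ⟨A, B, rfl⟩ := Ideal.mem_span_pair.mp hF
  rw [evalEval_add, evalEval_mul, evalEval_mul, hP, hQ, mul_zero, mul_zero, add_zero]

theorem C_X_sub_C_dvd_iff_map_evalRingHom_eq_zero {R : Type*} [CommRing R] {P : R[X][Y]} {x : R} :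
    C (X - C x) ∣ P ↔ P.map (evalRingHom x) = 0 := by
  simp only [C_dvd_iff_dvd_coeff, dvd_iff_isRoot, IsRoot.def, Polynomial.ext_iff, coeff_map,
    coe_evalRingHom, coeff_zero]

section CommonZeros

variable {R : Type*} [CommRing R] [IsDomain R] {P Q : R[X][Y]}

theorem finite_setOf_evalEval_eq_zero {x : R} (hP : P.map (evalRingHom x) ≠ 0) :
    {y | P.evalEval x y = 0}.Finite := by
  simpa only [IsRoot.def, map_evalRingHom_eval] using finite_setOfPred_isRoot hP

theorem finite_fiber_common_zeros (h : IsRelPrime P Q) (x : R) :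
    {y | P.evalEval x y = 0 ∧ Q.evalEval x y = 0}.Finite := by
  have hne : P.map (evalRingHom x) ≠ 0 ∨ Q.map (evalRingHom x) ≠ 0 := by
    by_contra! ⟨hP, hQ⟩
    exact not_isUnit_X_sub_C x <| isUnit_C.mp <|
      h (C_X_sub_C_dvd_iff_map_evalRingHom_eq_zero.mpr hP)
        (C_X_sub_C_dvd_iff_map_evalRingHom_eq_zero.mpr hQ)
  rcases hne with hP | hQ
  · exact (finite_setOf_evalEval_eq_zero hP).subset fun _ hy ↦ hy.1
  · exact (finite_setOf_evalEval_eq_zero hQ).subset fun _ hy ↦ hy.2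

theorem common_zeros_finite_general [IsGCDMonoid R] (h : IsRelPrime P Q) :
    {p : R × R | P.evalEval p.1 p.2 = 0 ∧ Q.evalEval p.1 p.2 = 0}.Finite := by
  obtain ⟨r, hr, hr_mem⟩ := exists_ne_zero_C_mem_span_pair h
  refine Set.Finite.of_finite_fibers Prod.fst ((finite_setOfPred_isRoot hr).subset ?_) ?_
  · rintro _ ⟨⟨x, y⟩, ⟨hP, hQ⟩, rfl⟩
    have hr_zero := evalEval_eq_zero_of_mem_span_pair hP hQ hr_mem
    rwa [evalEval_C] at hr_zero
  · intro x _
    refine ((finite_fiber_common_zeros h x).image (Prod.mk x)).subset ?_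
    rintro ⟨_, y⟩ ⟨hy, rfl⟩
    exact ⟨y, hy, rfl⟩

end CommonZeros

/-- If `P, Q ∈ ℂ[X,Y]` are nonzero and have no common non-unit factor, then their set of
common zeros in `ℂ²` is finite. -/
theorem common_zeros_finite (P Q : Polynomial (Polynomial ℂ))
    (hP : P ≠ 0) (hQ : Q ≠ 0) (h : IsRelPrime P Q) :
    {p : ℂ × ℂ | evalXY P p.1 p.2 = 0 ∧ evalXY Q p.1 p.2 = 0}.Finite := by
  simpa only [evalXY, map_evalRingHom_eval] using common_zeros_finite_general h
end

section
/- Let P, Q ∈ ℂ[X][Y] be nonzero polynomials with no common non-unit factor, let p_j, q_j ∈ ℂ[X] be their coefficients as polynomials in Y, let m = deg_Y P, n = deg_Y Q, and K = max(n, m−2). Define P̃ := Σ_{j=0}^{m} p_j(X) Y^{K+2−j} and Q̃ := Σ_{j=0}^{n} q_j(X) Y^{K−j} in ℂ[X][Y]. Then P̃ and Q̃ have no common non-unit factor. -/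
/-! Both `P̃` and `Q̃` are reflections `Y ^ N * F (1 / Y)`: of `F = P` with `N = K + 2`, and of
`F = Q` with `N = K`. A common divisor `d` of `P̃` and `Q̃` reverses to a common divisor of `P` and
`Q`, so its reverse is a unit; hence `d` is a unit times a power of `Y`. By the choice of `K`, one
of the two values of `N` is the exact degree of the polynomial reflected, and that reflection does
not vanish at `Y = 0`, so the power of `Y` is trivial. -/

section

open Polynomial

variable {R : Type*} [Semiring R]

theorem reflect_sum {ι : Type*} (N : ℕ) (s : Finset ι) (f : ι → R[X]) :
    reflect N (∑ i ∈ s, f i) = ∑ i ∈ s, reflect N (f i) := by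
  ext k
  simp only [coeff_reflect, finsetSum_coeff]

theorem reflect_eq_sum_range {N : ℕ} {p : R[X]} (hN : p.natDegree ≤ N) :
    reflect N p = ∑ j ∈ Finset.range (p.natDegree + 1), C (p.coeff j) * X ^ (N - j) := by
  conv_lhs => rw [p.as_sum_range_C_mul_X_pow, reflect_sum]
  refine Finset.sum_congr rfl fun j hj => ?_
  have hjN : j ≤ N := (Finset.mem_range_succ_iff.mp hj).trans hN
  rw [reflect_C_mul_X_pow, revAt_le hjN]

theorem coeff_zero_ne_zero_of_dvd_reflect {N : ℕ} {p d : R[X]} (hp : p.coeff N ≠ 0)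
    (hd : d ∣ reflect N p) : d.coeff 0 ≠ 0 := by
  obtain ⟨e, he⟩ := hd
  have hcoeff : p.coeff N = d.coeff 0 * e.coeff 0 := by
    rw [← mul_coeff_zero, ← he, coeff_reflect, revAt_zero]
  exact left_ne_zero_of_mul (hcoeff ▸ hp)

variable [NoZeroDivisors R]

theorem reverse_dvd_of_dvd_reflect {N : ℕ} {p d : R[X]} (hN : p.natDegree ≤ N)
    (hd : d ∣ reflect N p) : reverse d ∣ p := by
  obtain rfl | hp := eq_or_ne p 0
  · exact dvd_zero _
  obtain ⟨e, he⟩ := hd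
  have hde : d * e ≠ 0 := he ▸ reflect_eq_zero_iff.not.mpr hp
  have hdeg : d.natDegree + e.natDegree ≤ N := by
    rw [← natDegree_mul (left_ne_zero_of_mul hde) (right_ne_zero_of_mul hde), ← he]
    exact natDegree_reflect_le.trans_eq (max_eq_left hN)
  obtain ⟨k, rfl⟩ := Nat.exists_eq_add_of_le (le_of_add_le_left hdeg)
  refine ⟨reflect k e, ?_⟩
  calc
    p = reflect (d.natDegree + k) (d * e) := by rw [← he, reflect_reflect]
    _ = reverse d * reflect k e := reflect_mul d e le_rfl (by omega)

theorem isUnit_of_isUnit_reverse {d : R[X]} (h0 : d.coeff 0 ≠ 0) (hd : IsUnit (reverse d)) :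
    IsUnit d := by
  have hdeg : d.natDegree = 0 := by
    rw [natDegree_eq_reverse_natDegree_add_natTrailingDegree, natDegree_eq_zero_of_isUnit hd,
      natTrailingDegree_eq_zero.mpr (Or.inr h0)]
  obtain ⟨c, rfl⟩ := natDegree_eq_zero.mp hdeg
  rwa [reverse_C] at hd

theorem isRelPrime_reflect {M N : ℕ} {p q : R[X]} (hp : p.natDegree ≤ M) (hq : q.natDegree ≤ N)
    (htop : p.coeff M ≠ 0 ∨ q.coeff N ≠ 0) (h : IsRelPrime p q) :
    IsRelPrime (reflect M p) (reflect N q) := by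
  intro d hdp hdq
  have h0 : d.coeff 0 ≠ 0 :=
    htop.elim (coeff_zero_ne_zero_of_dvd_reflect · hdp) (coeff_zero_ne_zero_of_dvd_reflect · hdq)
  exact isUnit_of_isUnit_reverse h0
    (h (reverse_dvd_of_dvd_reflect hp hdp) (reverse_dvd_of_dvd_reflect hq hdq))

-- The truncated difference `P.natDegree - 2` gives the intended maximum, as `Q.natDegree` is
-- nonnegative.
theorem transformed_pair_coprime_general (P Q : R[X]) (hQ : Q ≠ 0) (h : IsRelPrime P Q) :
    IsRelPrime
      (∑ j ∈ Finset.range (P.natDegree + 1),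
        C (P.coeff j) * X ^ (max Q.natDegree (P.natDegree - 2) + 2 - j))
      (∑ j ∈ Finset.range (Q.natDegree + 1),
        C (Q.coeff j) * X ^ (max Q.natDegree (P.natDegree - 2) - j)) := by
  set K := max Q.natDegree (P.natDegree - 2)
  have hPK : P.natDegree ≤ K + 2 := by omega
  have hQK : Q.natDegree ≤ K := le_max_left _ _
  have htop : P.coeff (K + 2) ≠ 0 ∨ Q.coeff K ≠ 0 := by
    obtain hK | hK : Q.natDegree = K ∨ P.natDegree = K + 2 := by omega
    · exact Or.inr (hK ▸ leadingCoeff_ne_zero.mpr hQ)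
    · have hP : P ≠ 0 := ne_zero_of_natDegree_gt (n := 0) (by omega)
      exact Or.inl (hK ▸ leadingCoeff_ne_zero.mpr hP)
  rw [← reflect_eq_sum_range hPK, ← reflect_eq_sum_range hQK]
  exact isRelPrime_reflect hPK hQK htop h

end

open Polynomial in
/-- After the change of variable `Y = 1/y`, the differential equation
`dy/dx = P(x,y)/Q(x,y)` becomes `dY/dx = P̃(x,Y)/Q̃(x,Y)` with
`P̃ = Σ_{j=0}^{m} p_j(X) Y^{K+2−j}` and `Q̃ = Σ_{j=0}^{n} q_j(X) Y^{K−j}`, where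
`m = deg_Y P`, `n = deg_Y Q`, `K = max(n, m−2)`.  If `P` and `Q` are nonzero with no
common non-unit factor, then `P̃` and `Q̃` have no common non-unit factor. -/
theorem transformed_pair_coprime (P Q : Polynomial (Polynomial ℂ))
    (hP : P ≠ 0) (hQ : Q ≠ 0) (h : IsRelPrime P Q) :
    IsRelPrime
      (∑ j ∈ Finset.range (P.natDegree + 1),
        C (P.coeff j) * (X : Polynomial (Polynomial ℂ)) ^
          (max Q.natDegree (P.natDegree - 2) + 2 - j))
      (∑ j ∈ Finset.range (Q.natDegree + 1),
        C (Q.coeff j) * (X : Polynomial (Polynomial ℂ)) ^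
          (max Q.natDegree (P.natDegree - 2) - j)) :=
  transformed_pair_coprime_general P Q hQ h
end

section
/- Let P, Q ∈ ℂ[X][Y] be nonzero polynomials with no common non-unit factor, with coefficients p_j, q_j ∈ ℂ[X] as polynomials in Y (q_j := 0 for j > deg_Y Q), let m = deg_Y P, n = deg_Y Q, and K = max(n, m−2). Suppose there exists x₀ ∈ ℂ such that: (i) Q(x₀, y) ≠ 0 for every y ∈ ℂ, and (ii) q_K(x₀) ≠ 0. Then n = 0 and m ≤ 2; that is, Q depends only on x and P has degree at most 2 in y, so the equation dy/dx = P(x,y)/Q(x,y) is a Riccati equation dy/dx = (a(x)y² + b(x)y + c(x))/Q(x) with a, b, c, Q ∈ ℂ[X]. -/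
section

open Polynomial

theorem le_natDegree_of_coeff_max_natDegree_ne_zero {R : Type*} [Semiring R] {p : R[X]} {d : ℕ}
    (hp : p.coeff (max p.natDegree d) ≠ 0) : d ≤ p.natDegree :=
  (le_max_right _ _).trans (le_natDegree_of_ne_zero hp)

variable {R k : Type*} [Semiring R] [Field k] [IsAlgClosed k] {φ : R →+* k}

theorem natDegree_eq_zero_of_forall_eval_map_ne_zero {p : R[X]}
    (hlead : φ p.leadingCoeff ≠ 0) (hroot : ∀ y, (p.map φ).eval y ≠ 0) : p.natDegree = 0 := by
  by_contra hdeg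
  have hmap : (p.map φ).degree ≠ 0 := by
    rw [degree_map_eq_of_leadingCoeff_ne_zero φ hlead]
    exact mt natDegree_eq_of_degree_eq_some hdeg
  obtain ⟨y, hy⟩ := IsAlgClosed.exists_root (p.map φ) hmap
  exact hroot y hy

/-- `φ` plays the role of evaluation at `x = x₀`; `hfinite` and `hinfty` are transversality at the
finite points of the vertical line and at `y = ∞`. -/
theorem riccati_criterion_general {P Q : R[X]} (hfinite : ∀ y, (Q.map φ).eval y ≠ 0)
    (hinfty : φ (Q.coeff (max Q.natDegree (P.natDegree - 2))) ≠ 0) :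
    Q.natDegree = 0 ∧ P.natDegree ≤ 2 := by
  have hPQ : P.natDegree - 2 ≤ Q.natDegree :=
    le_natDegree_of_coeff_max_natDegree_ne_zero (ne_zero_of_map hinfty)
  have hlead : φ Q.leadingCoeff ≠ 0 := by rwa [max_eq_left hPQ] at hinfty
  have hQ : Q.natDegree = 0 := natDegree_eq_zero_of_forall_eval_map_ne_zero hlead hfinite
  exact ⟨hQ, by lia⟩

end

/-- **Riccati criterion (algebraic core of Painlevé's proposition).**
Let `P, Q ∈ ℂ[X][Y]` be nonzero coprime polynomials, `m = deg_Y P`, `n = deg_Y Q`,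
`K = max(n, m−2)`.  If there is a point `x₀ ∈ ℂ` such that (i) `Q(x₀, y) ≠ 0` for all
`y ∈ ℂ` and (ii) `q_K(x₀) ≠ 0`, then `n = 0` and `m ≤ 2`: the equation
`dy/dx = P(x,y)/Q(x,y)` is a Riccati equation. -/
theorem riccati_criterion (P Q : Polynomial (Polynomial ℂ))
    (hP : P ≠ 0) (hQ : Q ≠ 0) (h : IsRelPrime P Q) (x₀ : ℂ)
    (h₁ : ∀ y : ℂ, evalXY Q x₀ y ≠ 0)
    (h₂ : (Q.coeff (max Q.natDegree (P.natDegree - 2))).eval x₀ ≠ 0) :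
    Q.natDegree = 0 ∧ P.natDegree ≤ 2 :=
  riccati_criterion_general h₁ h₂
end

section
/- Let k ≥ 2 be an integer and let H be a holomorphic function on an open neighborhood of (0,0) ∈ ℂ² with H(0,0) = 0. Assume: (i) there is a function u, holomorphic near (0,0) with u(0,0) ≠ 0, such that ∂H/∂y (x,y) = y^{k−1} u(x,y) for all (x,y) near (0,0); and (ii) the function x ↦ H(x,0) has nonzero derivative at x = 0. Then there exist a function v, holomorphic on a neighborhood of (0,0) ∈ ℂ² with v(0,0) ≠ 0, and a function ψ, holomorphic on a neighborhood of 0 ∈ ℂ with ψ(0) = 0 and ψ′(0) ≠ 0, such that H(x,y) = ψ( x + (y · v(x,y))^k ) for all (x,y) in a neighborhood of (0,0). -/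
open Filter

/-!
Let `φ` be the local inverse of `ψ = H(·, 0)`. Then `G = φ ∘ H` satisfies `G(x, 0) = x` and
`∂G/∂y = yᵏ⁻¹ U` with `U = (φ' ∘ H) u` nonvanishing at the origin. Integrating along the segment
from `(x, 0)` to `(x, y)` gives `G = x + yᵏ ∫₀¹ tᵏ⁻¹ U(x, t y) dt`. The integral is analytic, since
the power series of `U` may be integrated term by term, and its value `U(0, 0) / k` at the origin is
nonzero, so it is `vᵏ` for some analytic `v`. Hence `H = ψ ∘ G` has the required form.
-/

open MeasureTheory Set Topology
open scoped ENNReal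

section IntegralOfPowerSeries

variable {𝕜 T E E' F : Type*} [RCLike 𝕜] [MeasurableSpace T] {μ : Measure T}
  [NormedAddCommGroup E] [NormedSpace 𝕜 E] [NormedAddCommGroup E'] [NormedSpace 𝕜 E']
  [NormedAddCommGroup F] [NormedSpace ℝ F] [NormedSpace 𝕜 F]

theorem radius_le_radius_integral {q : T → FormalMultilinearSeries 𝕜 E F}
    {p : FormalMultilinearSeries 𝕜 E' F} {c : T → ℝ} (hc : Integrable c μ)
    (hqp : ∀ n, ∀ᵐ t ∂μ, ‖q t n‖ ≤ c t * ‖p n‖) :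
    p.radius ≤ FormalMultilinearSeries.radius fun n ↦ ∫ t, q t n ∂μ := by
  refine FormalMultilinearSeries.radius_le_smul.trans
    (FormalMultilinearSeries.radius_le_of_le (q := (∫ t, c t ∂μ) • p) fun n ↦ ?_)
  calc ‖∫ t, q t n ∂μ‖ ≤ ∫ t, c t * ‖p n‖ ∂μ :=
        norm_integral_le_of_norm_le (hc.mul_const _) (hqp n)
    _ = (∫ t, c t ∂μ) * ‖p n‖ := integral_mul_const _ _
    _ ≤ ‖∫ t, c t ∂μ‖ * ‖p n‖ := by gcongr; exact Real.le_norm_self _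
    _ = ‖((∫ t, c t ∂μ) • p) n‖ := (norm_smul _ _).symm

theorem hasFPowerSeriesOnBall_integral {f : T → E → F}
    {q : T → FormalMultilinearSeries 𝕜 E F} {p : FormalMultilinearSeries 𝕜 E' F} {c : T → ℝ}
    {x : E} {r : ℝ≥0∞} (hc : Integrable c μ)
    (hq : ∀ n, AEStronglyMeasurable (fun t ↦ q t n) μ)
    (hqp : ∀ n, ∀ᵐ t ∂μ, ‖q t n‖ ≤ c t * ‖p n‖) (hr : 0 < r) (hrp : r ≤ p.radius)
    (hf : ∀ᵐ t ∂μ, HasFPowerSeriesOnBall (f t) (q t) x r) :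
    HasFPowerSeriesOnBall (fun z ↦ ∫ t, f t z ∂μ) (fun n ↦ ∫ t, q t n ∂μ) x r := by
  refine ⟨hrp.trans (radius_le_radius_integral hc hqp), hr, fun {y} hy ↦ ?_⟩
  have integrable_coeff (n : ℕ) : Integrable (fun t ↦ q t n) μ :=
    (hc.mul_const _).mono' (hq n) (hqp n)
  have summable_bound : Summable fun n ↦ ‖p n‖ * ‖y‖ ^ n :=
    p.summable_norm_mul_pow (r := ‖y‖₊) (lt_of_lt_of_le (by simpa [← enorm_eq_nnnorm] using hy) hrp)
  simp only [ContinuousMultilinearMap.integral_apply (integrable_coeff _)]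
  refine hasSum_integral_of_dominated_convergence (fun n t ↦ c t * (‖p n‖ * ‖y‖ ^ n))
    (fun n ↦ ?_) (fun n ↦ ?_) (ae_of_all _ fun t ↦ summable_bound.mul_left _) ?_ ?_
  · exact (ContinuousMultilinearMap.apply 𝕜 _ F _).continuous.comp_aestronglyMeasurable (hq n)
  · filter_upwards [hqp n] with t ht
    calc ‖q t n fun _ ↦ y‖ ≤ ‖q t n‖ * ‖y‖ ^ n := by
          simpa using (q t n).le_opNorm fun _ ↦ y
      _ ≤ c t * ‖p n‖ * ‖y‖ ^ n := by gcongr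
      _ = c t * (‖p n‖ * ‖y‖ ^ n) := mul_assoc _ _ _
  · simpa only [tsum_mul_left] using hc.mul_const _
  · filter_upwards [hf] with t ht using ht.hasSum hy

theorem analyticAt_integral_smul_comp_clm {f : E' → F} (hf : AnalyticAt 𝕜 f 0)
    {c : T → ℝ} (hc : Integrable c μ) {L : T → E →L[𝕜] E'} (hL : AEStronglyMeasurable L μ)
    (hL1 : ∀ᵐ t ∂μ, ‖L t‖ ≤ 1) :
    AnalyticAt 𝕜 (fun z ↦ ∫ t, c t • f (L t z) ∂μ) 0 := by
  obtain ⟨p, r, hp⟩ := hf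
  refine ⟨_, r, hasFPowerSeriesOnBall_integral (p := p) hc.norm
    (q := fun t ↦ c t • p.compContinuousLinearMap (L t)) (fun n ↦ ?_) (fun n ↦ ?_)
    hp.r_pos hp.r_le ?_⟩
  · have hcont : Continuous fun u : E →L[𝕜] E' ↦ p.compContinuousLinearMap u n :=
      ((p n).compContinuousLinearMapLRight (E := fun _ ↦ E)).cont.comp
        (continuous_pi fun _ ↦ continuous_id)
    exact hc.aestronglyMeasurable.smul (hcont.comp_aestronglyMeasurable hL)
  · filter_upwards [hL1] with t ht
    calc ‖c t • p.compContinuousLinearMap (L t) n‖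
        ≤ ‖c t‖ * (‖p n‖ * ‖L t‖ ^ n) := by
          rw [norm_smul]
          gcongr
          exact p.norm_compContinuousLinearMap_le (L t) n
      _ ≤ ‖c t‖ * ‖p n‖ := by
          gcongr
          exact mul_le_of_le_one_right (norm_nonneg _) (pow_le_one₀ (norm_nonneg _) ht)
  · filter_upwards [hL1] with t ht
    have hp0 : HasFPowerSeriesOnBall f p (L t 0) r := by rwa [map_zero]
    refine (hp0.compContinuousLinearMap.mono hp.r_pos ?_).const_smul
    have ht' : ‖L t‖ₑ ≤ 1 := by
      simpa only [← ofReal_norm, ENNReal.ofReal_le_one] using ht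
    simpa using ENNReal.div_le_div_left ht' r

end IntegralOfPowerSeries

/-- The dilation `(x, y) ↦ (x, t y)` of the fibres of `E × 𝕜 → E`. Its ratio `t` is real, as
functions are averaged over these dilations for `t ∈ [0, 1]`. -/
noncomputable def fiberDilation (𝕜 E : Type*) [RCLike 𝕜] [NormedAddCommGroup E] [NormedSpace 𝕜 E]
    (t : ℝ) : E × 𝕜 →L[𝕜] E × 𝕜 :=
  (ContinuousLinearMap.id 𝕜 E).prodMap (t • ContinuousLinearMap.id 𝕜 𝕜)

/-- The `n`-th moment `∫₀¹ tⁿ U(x, t y) dt` of `U` along the segment from `(x, 0)` to `(x, y)`: the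
quotient by `yⁿ⁺¹` of the primitive of `yⁿ U` along the fibre over `x`. The weight `tⁿ` is real,
whatever the scalars of the fibre. -/
noncomputable def fiberMoment {𝕜 E F : Type*} [RCLike 𝕜]
    [NormedAddCommGroup F] [NormedSpace ℝ F] (n : ℕ) (U : E × 𝕜 → F) (p : E × 𝕜) : F :=
  ∫ t in (0 : ℝ)..1, t ^ n • U (p.1, t • p.2)

theorem fiberMoment_zero {𝕜 E F : Type*} [RCLike 𝕜] [Zero E] [NormedAddCommGroup F]
    [NormedSpace ℝ F] [CompleteSpace F] (n : ℕ) (U : E × 𝕜 → F) :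
    fiberMoment n U 0 = ((n : ℝ) + 1)⁻¹ • U 0 := by
  simp [fiberMoment, Prod.mk_zero_zero]

section FiberDilation

variable {𝕜 E : Type*} [RCLike 𝕜] [NormedAddCommGroup E] [NormedSpace 𝕜 E]

@[simp]
theorem fiberDilation_apply (t : ℝ) (p : E × 𝕜) : fiberDilation 𝕜 E t p = (p.1, t • p.2) :=
  rfl

theorem continuous_fiberDilation : Continuous (fiberDilation 𝕜 E) :=
  (ContinuousLinearMap.prodMapL 𝕜 E E 𝕜 𝕜).continuous.comp (by fun_prop : Continuous fun t : ℝ ↦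
    (ContinuousLinearMap.id 𝕜 E, t • ContinuousLinearMap.id 𝕜 𝕜))

theorem norm_fiberDilation_le_one {t : ℝ} (ht : t ∈ Icc 0 1) : ‖fiberDilation 𝕜 E t‖ ≤ 1 := by
  refine ContinuousLinearMap.opNorm_le_bound _ zero_le_one fun p ↦ ?_
  rw [one_mul, fiberDilation_apply, Prod.norm_def, Prod.norm_def, norm_smul]
  gcongr
  exact mul_le_of_le_one_left (norm_nonneg _) (by rw [Real.norm_of_nonneg ht.1]; exact ht.2)

theorem eventually_forall_fiberDilation {P : E × 𝕜 → Prop} (hP : ∀ᶠ p in 𝓝 0, P p) :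
    ∀ᶠ p : E × 𝕜 in 𝓝 0, ∀ t ∈ Icc (0 : ℝ) 1, P (p.1, t • p.2) := by
  obtain ⟨ε, hε, hball⟩ := Metric.eventually_nhds_iff_ball.1 hP
  filter_upwards [Metric.ball_mem_nhds 0 hε] with p hp t ht
  rw [mem_ball_zero_iff] at hp
  refine hball _ (mem_ball_zero_iff.2 ?_)
  exact ((fiberDilation 𝕜 E t).le_of_opNorm_le (norm_fiberDilation_le_one ht) p).trans_lt
    (by rwa [one_mul])

variable {F : Type*} [NormedAddCommGroup F] [NormedSpace ℝ F] [NormedSpace 𝕜 F]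

theorem analyticAt_fiberMoment (n : ℕ) {U : E × 𝕜 → F} (hU : AnalyticAt 𝕜 U 0) :
    AnalyticAt 𝕜 (fiberMoment n U) 0 := by
  unfold fiberMoment
  simp only [intervalIntegral.integral_of_le zero_le_one]
  refine analyticAt_integral_smul_comp_clm (L := fiberDilation 𝕜 E) hU
    ((continuous_pow n).integrableOn_Ioc) continuous_fiberDilation.aestronglyMeasurable ?_
  filter_upwards [ae_restrict_mem measurableSet_Ioc] with t ht
  exact norm_fiberDilation_le_one (Ioc_subset_Icc_self ht)

theorem sub_eq_pow_smul_integral_of_hasDerivAt [CompleteSpace F] {g U : 𝕜 → F} {y : 𝕜} {n : ℕ}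
    (hU : ContinuousOn (fun t : ℝ ↦ U (t • y)) (Icc 0 1))
    (hg : ∀ t ∈ Icc (0 : ℝ) 1, HasDerivAt g ((t • y) ^ n • U (t • y)) (t • y)) :
    g y - g 0 = y ^ (n + 1) • ∫ t in (0 : ℝ)..1, t ^ n • U (t • y) := by
  have hcont : ContinuousOn (fun t : ℝ ↦ (t • y) ^ n • U (t • y)) (Icc 0 1) :=
    (by fun_prop : Continuous fun t : ℝ ↦ (t • y) ^ n).continuousOn.smul hU
  have hftc := intervalIntegral.integral_unitInterval_deriv_eq_sub (z₀ := 0) (z₁ := y)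
    (f := g) (f' := fun z ↦ z ^ n • U z) (by simpa using hcont) (by simpa using hg)
  simp only [zero_add] at hftc
  calc g y - g 0 = y • ∫ t in (0 : ℝ)..1, (t • y) ^ n • U (t • y) := hftc.symm
    _ = y • ∫ t in (0 : ℝ)..1, y ^ n • t ^ n • U (t • y) := by
      simp only [smul_pow, smul_assoc, smul_comm (y ^ n)]
    _ = y ^ (n + 1) • ∫ t in (0 : ℝ)..1, t ^ n • U (t • y) := by
      rw [intervalIntegral.integral_smul, smul_smul, pow_succ']

theorem eventually_eq_add_pow_smul_fiberMoment [CompleteSpace F] {n : ℕ} {G U : E × 𝕜 → F}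
    (hU : ∀ᶠ p in 𝓝 0, ContinuousAt U p)
    (hG : ∀ᶠ p in 𝓝 0, HasDerivAt (fun y ↦ G (p.1, y)) (p.2 ^ n • U p) p.2) :
    ∀ᶠ p in 𝓝 0, G p = G (p.1, 0) + p.2 ^ (n + 1) • fiberMoment n U p := by
  filter_upwards [eventually_forall_fiberDilation hU, eventually_forall_fiberDilation hG]
    with ⟨x, y⟩ hUy hGy
  have hcont : ContinuousOn (fun t : ℝ ↦ U (x, t • y)) (Icc 0 1) := fun t ht ↦
    ((hUy t ht).comp (f := fun t : ℝ ↦ (x, t • y)) (by fun_prop)).continuousWithinAt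
  exact sub_eq_iff_eq_add'.1 (sub_eq_pow_smul_integral_of_hasDerivAt
    (g := fun y ↦ G (x, y)) (U := fun y ↦ U (x, y)) hcont hGy)

end FiberDilation

theorem exists_analyticAt_local_inverse {𝕜 : Type*} [NontriviallyNormedField 𝕜] [CompleteSpace 𝕜]
    [CharZero 𝕜] {f : 𝕜 → 𝕜} {x : 𝕜} (hf : AnalyticAt 𝕜 f x) (hf' : deriv f x ≠ 0) :
    ∃ g : 𝕜 → 𝕜, AnalyticAt 𝕜 g (f x) ∧ deriv g (f x) = (deriv f x)⁻¹ ∧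
      (∀ᶠ z in 𝓝 x, g (f z) = z) ∧ ∀ᶠ w in 𝓝 (f x), f (g w) = w :=
  ⟨_, hf.analyticAt_localInverse hf', (hf.hasStrictDerivAt.to_localInverse hf').hasDerivAt.deriv,
    HasStrictDerivAt.eventually_left_inverse _ hf',
    HasStrictDerivAt.eventually_right_inverse _ hf'⟩

theorem eventually_hasDerivAt_comp_snd {𝕜 E : Type*} [NontriviallyNormedField 𝕜]
    [CompleteSpace 𝕜] [NormedAddCommGroup E] [NormedSpace 𝕜 E] {φ : 𝕜 → 𝕜} {H : E × 𝕜 → 𝕜}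
    {a : E × 𝕜} (hH : AnalyticAt 𝕜 H a) (hφ : AnalyticAt 𝕜 φ (H a)) :
    ∀ᶠ p in 𝓝 a, HasDerivAt (fun y ↦ φ (H (p.1, y)))
      (deriv φ (H p) * deriv (fun y ↦ H (p.1, y)) p.2) p.2 := by
  filter_upwards [hH.eventually_analyticAt,
    hH.continuousAt.eventually hφ.eventually_analyticAt] with p hHp hφp
  exact hφp.differentiableAt.hasDerivAt.comp p.2 hHp.along_snd.differentiableAt.hasDerivAt

section ComplexFiber

variable {E : Type*} [NormedAddCommGroup E] [NormedSpace ℂ E]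

theorem exists_analyticAt_pow_eq {f : E → ℂ} {x : E} (hf : AnalyticAt ℂ f x) (hfx : f x ≠ 0)
    {k : ℕ} (hk : k ≠ 0) :
    ∃ v : E → ℂ, AnalyticAt ℂ v x ∧ ∀ z, v z ^ k = f z := by
  obtain ⟨c, hc⟩ := IsAlgClosed.exists_pow_nat_eq (f x) hk.pos
  refine ⟨fun z ↦ c * (f z / f x) ^ (k⁻¹ : ℂ), ?_, fun z ↦ ?_⟩
  · exact analyticAt_const.mul <|
      (hf.div analyticAt_const hfx).cpow analyticAt_const (by simp [hfx])
  · rw [mul_pow, Complex.cpow_nat_inv_pow _ hk, hc, mul_div_cancel₀ _ hfx]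

theorem exists_analyticAt_eq_add_mul_pow {n : ℕ} {G U : E × ℂ → ℂ}
    (hU : AnalyticAt ℂ U 0) (hU0 : U 0 ≠ 0)
    (hG : ∀ᶠ p in 𝓝 0, HasDerivAt (fun y ↦ G (p.1, y)) (p.2 ^ n * U p) p.2) :
    ∃ v : E × ℂ → ℂ, AnalyticAt ℂ v 0 ∧ v 0 ≠ 0 ∧
      ∀ᶠ p in 𝓝 0, G p = G (p.1, 0) + (p.2 * v p) ^ (n + 1) := by
  have hw0 : fiberMoment n U 0 ≠ 0 := by
    rw [fiberMoment_zero]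
    exact smul_ne_zero (by positivity) hU0
  obtain ⟨v, hv, hvw⟩ :=
    exists_analyticAt_pow_eq (analyticAt_fiberMoment n hU) hw0 n.succ_ne_zero
  refine ⟨v, hv, ?_, ?_⟩
  · exact (pow_ne_zero_iff n.succ_ne_zero).1 ((hvw 0).trans_ne hw0)
  · filter_upwards [eventually_eq_add_pow_smul_fiberMoment
      (hU.eventually_analyticAt.mono fun _ h ↦ h.continuousAt) hG] with p hp
    rw [mul_pow, hvw, ← smul_eq_mul]
    exact hp

end ComplexFiber

/-- **Painlevé's local normal form lemma (simple tangency with the vertical fibration).**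
Let `k ≥ 2` and let `H` be holomorphic near `(0,0) ∈ ℂ²` with `H(0,0) = 0`.  Assume
`∂H/∂y (x,y) = y^{k−1} u(x,y)` near `(0,0)` with `u` holomorphic, `u(0,0) ≠ 0`, and that
`x ↦ H(x,0)` has nonzero derivative at `0`.  Then there are a holomorphic `v` near
`(0,0)` with `v(0,0) ≠ 0` and a holomorphic `ψ` near `0 ∈ ℂ` with `ψ(0) = 0`,
`ψ′(0) ≠ 0`, such that `H(x,y) = ψ(x + (y·v(x,y))^k)` near `(0,0)`. -/
theorem painleve_normal_form (k : ℕ) (hk : 2 ≤ k) (H u : ℂ × ℂ → ℂ)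
    (hH : ∀ᶠ p in nhds ((0 : ℂ), (0 : ℂ)), AnalyticAt ℂ H p)
    (hH0 : H (0, 0) = 0)
    (hu : ∀ᶠ p in nhds ((0 : ℂ), (0 : ℂ)), AnalyticAt ℂ u p)
    (hu0 : u (0, 0) ≠ 0)
    (hdy : ∀ᶠ p in nhds ((0 : ℂ), (0 : ℂ)),
      deriv (fun y : ℂ => H (p.1, y)) p.2 = p.2 ^ (k - 1) * u p)
    (hx : deriv (fun x : ℂ => H (x, 0)) 0 ≠ 0) :
    ∃ (v : ℂ × ℂ → ℂ) (ψ : ℂ → ℂ),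
      (∀ᶠ p in nhds ((0 : ℂ), (0 : ℂ)), AnalyticAt ℂ v p) ∧ v (0, 0) ≠ 0 ∧
      (∀ᶠ z in nhds (0 : ℂ), AnalyticAt ℂ ψ z) ∧ ψ 0 = 0 ∧ deriv ψ 0 ≠ 0 ∧
      ∀ᶠ p in nhds ((0 : ℂ), (0 : ℂ)), H p = ψ (p.1 + (p.2 * v p) ^ k) := by
  have hHa : AnalyticAt ℂ H 0 := hH.self_of_nhds
  have hφH : AnalyticAt ℂ (fun x ↦ H (x, 0)) 0 := hHa.along_fst
  obtain ⟨φ, hφ, hφ', hleft, hright⟩ := exists_analyticAt_local_inverse hφH hx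
  have hU : AnalyticAt ℂ (fun p ↦ deriv φ (H p) * u p) 0 :=
    (AnalyticAt.comp (g := deriv φ) hφ.deriv hHa).mul hu.self_of_nhds
  have hU0 : deriv φ (H (0, 0)) * u (0, 0) ≠ 0 := by
    rw [hφ']
    exact mul_ne_zero (inv_ne_zero hx) hu0
  have hG : ∀ᶠ p in 𝓝 (0 : ℂ × ℂ),
      HasDerivAt (fun y ↦ φ (H (p.1, y))) (p.2 ^ (k - 1) * (deriv φ (H p) * u p)) p.2 := by
    filter_upwards [eventually_hasDerivAt_comp_snd hHa hφ, hdy] with p hp hdyp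
    rwa [hdyp, mul_left_comm] at hp
  obtain ⟨v, hv, hv0, hvG⟩ :=
    exists_analyticAt_eq_add_mul_pow (G := fun p ↦ φ (H p)) hU hU0 hG
  refine ⟨v, fun x ↦ H (x, 0), hv.eventually_analyticAt, hv0, hφH.eventually_analyticAt,
    hH0, hx, ?_⟩
  filter_upwards [hvG, continuous_fst.continuousAt.eventually hleft,
    hHa.continuousAt.eventually hright] with p hp hpl hpr
  rw [← hpr, hp, hpl, Nat.sub_add_cancel (by lia)]
end

section
/- Let p ∈ ℤ and q ≥ 1 be an integer with gcd(p,q) = 1, set α = p/q, and let f(x) = exp(α·Log x) (Log the principal branch of Complex.log) restricted to an open disk D₀ ⊆ ℂ ∖ {0} centered at x₀ = 1. Then the set S of germs at the point 1 obtained from f by analytic continuation along a chain of disks in Ω := ℂ ∖ {0} is exactly { germ at 1 of x ↦ exp(2πi·p·j/q)·exp(α·Log x) : j = 0, 1, …, q−1 }; in particular S has exactly q elements. -/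
open Filter Metric Set

/-!
Let `φ` be entire. A branch of the logarithm near a point `x` is determined by its value `w` at
`x`, and on a disk avoiding `0` there is a branch with any given logarithm of a point of the
disk as its value there. Hence continuing the germ of `φ ∘ log` from `1` amounts to moving `w`
in the plane, and the germs reached at `x` are the `φ ∘ L` with `L` a branch of the logarithm
near `x`, one branch for each solution `w` of `exp w = x`. For `φ w = exp (a * w)` and `x = 1`,
the solutions `w = 2πi m` give the multiples of the initial germ by the powers `ζ ^ m` of
`ζ = exp (2πi a)`, and `ζ` is a root of unity whose order is the reduced denominator of `a` when
`a` is rational.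
-/

open Complex Topology

theorem ball_subset_ball_norm_of_subset_compl_zero {E : Type*} [SeminormedAddCommGroup E] {c : E}
    {r : ℝ} (h : ball c r ⊆ {0}ᶜ) : ball c r ⊆ ball c ‖c‖ := by
  refine ball_subset_ball (not_lt.1 fun hlt ↦ h (a := 0) ?_ rfl)
  rwa [mem_ball, dist_zero_left]

theorem eqOn_of_eventuallyEq_of_differentiableOn {E : Type*} [NormedAddCommGroup E]
    [NormedSpace ℂ E] [CompleteSpace E] {s : Set ℂ} (hs : IsOpen s) (hsc : IsPreconnected s)
    {f g : ℂ → E} (hf : DifferentiableOn ℂ f s) (hg : DifferentiableOn ℂ g s) {x : ℂ}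
    (hx : x ∈ s) (hfg : f =ᶠ[𝓝 x] g) : EqOn f g s :=
  (hf.analyticOnNhd hs).eqOn_of_preconnected_of_eventuallyEq (hg.analyticOnNhd hs) hsc hx hfg

namespace ContinuationGerm

variable {Ω D₀ : Set ℂ} {f h : ℂ → ℂ} {c x y : ℂ} {r : ℝ}

theorem refl (hΩ : ball c r ⊆ Ω) (hf : DifferentiableOn ℂ f (ball c r)) (hx : x ∈ ball c r) :
    ContinuationGerm Ω f (ball c r) x f :=
  ⟨0, fun _ ↦ ball c r, fun _ ↦ f, rfl, fun _ _ ↦ rfl,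
    fun _ ↦ ⟨⟨c, r, pos_of_mem_ball hx, rfl⟩, hΩ, hf⟩, fun k ↦ k.elim0, hx, rfl⟩

theorem extend (hxh : ContinuationGerm Ω f D₀ x h) (hΩ : ball c r ⊆ Ω)
    (hh : DifferentiableOn ℂ h (ball c r)) (hx : x ∈ ball c r) (hy : y ∈ ball c r) :
    ContinuationGerm Ω f D₀ y h := by
  obtain ⟨n, D, F, hD₀, hF₀, hdisk, hstep, hxD, hgerm⟩ := hxh
  have hoverlap : EqOn (F (Fin.last n)) h (D (Fin.last n) ∩ ball c r) := by
    obtain ⟨⟨c', r', -, hD⟩, -, hF⟩ := hdisk (Fin.last n)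
    rw [hD] at hxD hF ⊢
    exact eqOn_of_eventuallyEq_of_differentiableOn (isOpen_ball.inter isOpen_ball)
      ((convex_ball c' r').inter (convex_ball c r)).isPreconnected (hF.mono inter_subset_left)
      (hh.mono inter_subset_right) ⟨hxD, hx⟩ (Germ.coe_eq.1 hgerm).symm
  refine ⟨n + 1, Fin.snoc D (ball c r), Fin.snoc F h, ?_, ?_, fun k ↦ ?_, fun k ↦ ?_, ?_, ?_⟩
  · rw [← Fin.castSucc_zero, Fin.snoc_castSucc, hD₀]
  · rwa [← Fin.castSucc_zero, Fin.snoc_castSucc]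
  · cases k using Fin.lastCases with
    | last =>
      simp only [Fin.snoc_last]
      exact ⟨⟨c, r, pos_of_mem_ball hx, rfl⟩, hΩ, hh⟩
    | cast k => simpa only [Fin.snoc_castSucc] using hdisk k
  · cases k using Fin.lastCases with
    | last =>
      simp only [Fin.succ_last, Fin.snoc_castSucc, Fin.snoc_last]
      exact ⟨⟨x, hxD, hx⟩, hoverlap⟩
    | cast k => simpa only [Fin.succ_castSucc, Fin.snoc_castSucc] using hstep k
  · rwa [Fin.snoc_last]
  · rw [Fin.snoc_last]

theorem induction {P : ∀ x : ℂ, Germ (𝓝 x) ℂ → Prop} (base : ∀ x ∈ D₀, P x f)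
    (extend : ∀ (c : ℂ) (r : ℝ) (h : ℂ → ℂ) (x y : ℂ), ball c r ⊆ Ω →
      DifferentiableOn ℂ h (ball c r) → x ∈ ball c r → y ∈ ball c r → P x h → P y h)
    {g : Germ (𝓝 x) ℂ} (hg : ContinuationGerm Ω f D₀ x g) : P x g := by
  obtain ⟨n, D, F, rfl, hF₀, hdisk, hstep, hxD, rfl⟩ := hg
  have hopen (k) : IsOpen (D k) := by
    obtain ⟨⟨c, r, -, hD⟩, -⟩ := hdisk k
    exact hD ▸ isOpen_ball
  suffices hP : ∀ k, ∀ y ∈ D k, P y (F k) from hP _ x hxD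
  intro k
  induction k using Fin.induction with
  | zero =>
    intro y hy
    rw [Germ.coe_eq.2 (hF₀.eventuallyEq_of_mem ((hopen 0).mem_nhds hy))]
    exact base y hy
  | succ k ih =>
    intro y hy
    obtain ⟨⟨z, hz⟩, hagree⟩ := hstep k
    obtain ⟨⟨c, r, -, hD⟩, hΩ, hF⟩ := hdisk k.succ
    have hPz : P z (F k.succ) := by
      rw [← Germ.coe_eq.2 (hagree.eventuallyEq_of_mem (((hopen _).inter (hopen _)).mem_nhds hz))]
      exact ih z hz.1
    rw [hD] at hΩ hF hy
    exact extend c r _ z y hΩ hF (hD ▸ hz.2) hy hPz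

end ContinuationGerm

/-- The branch of the logarithm near `exp w` that takes the value `w` there. -/
noncomputable def logBranch (w x : ℂ) : ℂ :=
  log (x / exp w) + w

/-- The largest open disk centered at `exp w` that avoids `0`, taken as the domain of
`logBranch w`. -/
def logDisk (w : ℂ) : Set ℂ :=
  ball (exp w) ‖exp w‖

section LogBranch

variable {w w' x c : ℂ} {r : ℝ}

theorem logBranch_of_exp_eq_one (hw : exp w = 1) (x : ℂ) : logBranch w x = log x + w := by
  rw [logBranch, hw, div_one]

theorem exp_logBranch (w : ℂ) (hx : x ≠ 0) : exp (logBranch w x) = x := by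
  rw [logBranch, exp_add, exp_log (div_ne_zero hx (exp_ne_zero w)),
    div_mul_cancel₀ x (exp_ne_zero w)]

theorem logBranch_exp_of_norm_sub_lt_pi (h : ‖w - w'‖ < Real.pi) : logBranch w' (exp w) = w := by
  have him := abs_lt.1 ((abs_im_le_norm _).trans_lt h)
  rw [logBranch, ← exp_sub, log_exp him.1 him.2.le, sub_add_cancel]

theorem isOpen_logDisk (w : ℂ) : IsOpen (logDisk w) :=
  isOpen_ball

theorem logDisk_subset_compl_zero (w : ℂ) : logDisk w ⊆ {0}ᶜ := by
  rintro x hx rfl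
  simp [logDisk] at hx

theorem exp_mem_logDisk_of_norm_sub_lt (h : ‖w - w'‖ < 1 / 2) : exp w ∈ logDisk w' := by
  have hlt : ‖exp (w - w') - 1‖ < 1 :=
    (norm_exp_sub_one_le (h.le.trans (by norm_num))).trans_lt (by linarith)
  rw [logDisk, mem_ball_iff_norm]
  calc ‖exp w - exp w'‖ = ‖exp (w - w') - 1‖ * ‖exp w'‖ := by
        rw [← norm_mul, sub_mul, ← exp_add, sub_add_cancel, one_mul]
    _ < ‖exp w'‖ := mul_lt_of_lt_one_left (norm_pos_iff.2 (exp_ne_zero w')) hlt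

theorem div_exp_mem_slitPlane (hx : x ∈ logDisk w) : x / exp w ∈ slitPlane := by
  refine ball_one_subset_slitPlane (mem_ball_iff_norm.2 ?_)
  rw [div_sub_one (exp_ne_zero w), norm_div, div_lt_one (norm_pos_iff.2 (exp_ne_zero w))]
  exact mem_ball_iff_norm.1 hx

theorem differentiableOn_logBranch (w : ℂ) : DifferentiableOn ℂ (logBranch w) (logDisk w) :=
  fun _ hx ↦ (((differentiableAt_id.div_const _).clog (div_exp_mem_slitPlane hx)).add_const
    w).differentiableWithinAt

theorem eventuallyEq_logBranch {L : ℂ → ℂ} (hL : ContinuousAt L x)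
    (hexp : ∀ᶠ y in 𝓝 x, exp (L y) = y) : L =ᶠ[𝓝 x] logBranch (L x) := by
  filter_upwards [hexp, hL (ball_mem_nhds _ Real.pi_pos)] with y hy hnear
  rw [← logBranch_exp_of_norm_sub_lt_pi (mem_ball_iff_norm.1 hnear), hy]

theorem logBranch_eventuallyEq_logBranch (hx : x ∈ logDisk w) :
    logBranch w =ᶠ[𝓝 x] logBranch (logBranch w x) := by
  have hnhds := (isOpen_logDisk w).mem_nhds hx
  refine eventuallyEq_logBranch ((differentiableOn_logBranch w).differentiableAt hnhds).continuousAt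
    ?_
  filter_upwards [hnhds] with y hy
  exact exp_logBranch w (logDisk_subset_compl_zero w hy)

theorem log_eventuallyEq_logBranch (hx : x ∈ slitPlane) : log =ᶠ[𝓝 x] logBranch (log x) := by
  refine eventuallyEq_logBranch (continuousAt_clog hx) ?_
  filter_upwards [isOpen_ne.mem_nhds (slitPlane_ne_zero hx)] with y hy
  exact exp_log hy

theorem exists_logBranch_exp_eq (h : ball c r ⊆ {0}ᶜ) (hw : exp w ∈ ball c r) :
    ∃ w', ball c r ⊆ logDisk w' ∧ logBranch w' (exp w) = w := by
  have hc : c ≠ 0 := h (mem_ball_self (pos_of_mem_ball hw))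
  have hexp : exp (w - log (exp w / c)) = c := by
    rw [exp_sub, exp_log (div_ne_zero (exp_ne_zero w) hc), div_div_cancel₀ (exp_ne_zero w)]
  refine ⟨w - log (exp w / c), ?_, ?_⟩
  · rw [logDisk, hexp]
    exact ball_subset_ball_norm_of_subset_compl_zero h
  · rw [logBranch, hexp, add_sub_cancel]

end LogBranch

section CompLog

variable {φ : ℂ → ℂ} {r : ℝ} {x : ℂ} {g : Germ (𝓝 x) ℂ}

theorem ball_one_subset_slitPlane_of_subset_compl_zero (hD : ball (1 : ℂ) r ⊆ {0}ᶜ) :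
    ball 1 r ⊆ slitPlane := by
  have h := ball_subset_ball_norm_of_subset_compl_zero hD
  rw [norm_one] at h
  exact h.trans ball_one_subset_slitPlane

theorem ContinuationGerm.exists_eq_comp_logBranch (hφ : Differentiable ℂ φ)
    (hD : ball (1 : ℂ) r ⊆ {0}ᶜ)
    (hg : ContinuationGerm {0}ᶜ (fun z ↦ φ (log z)) (ball 1 r) x g) :
    ∃ w, exp w = x ∧ g = ↑(fun z ↦ φ (logBranch w z)) := by
  refine hg.induction (P := fun x g ↦ ∃ w, exp w = x ∧ g = ↑(fun z ↦ φ (logBranch w z))) ?_ ?_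
  · intro x hx
    have hslit := ball_one_subset_slitPlane_of_subset_compl_zero hD hx
    exact ⟨log x, exp_log (slitPlane_ne_zero hslit),
      Germ.coe_eq.2 ((log_eventuallyEq_logBranch hslit).fun_comp φ)⟩
  · rintro c r h _ y hsub hh hx hy ⟨w, rfl, hhw⟩
    obtain ⟨w', hdisk, hw'⟩ := exists_logBranch_exp_eq hsub hx
    have hnear : h =ᶠ[𝓝 (exp w)] fun z ↦ φ (logBranch w' z) := by
      have hlog := logBranch_eventuallyEq_logBranch (hdisk hx)
      rw [hw'] at hlog
      exact (Germ.coe_eq.1 hhw).trans (hlog.symm.fun_comp φ)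
    have hball : EqOn h (fun z ↦ φ (logBranch w' z)) (ball c r) :=
      eqOn_of_eventuallyEq_of_differentiableOn isOpen_ball (convex_ball c r).isPreconnected hh
        (hφ.comp_differentiableOn ((differentiableOn_logBranch w').mono hdisk)) hx hnear
    refine ⟨logBranch w' y, exp_logBranch w' (hsub hy), Germ.coe_eq.2 ?_⟩
    exact (hball.eventuallyEq_of_mem (isOpen_ball.mem_nhds hy)).trans
      ((logBranch_eventuallyEq_logBranch (hdisk hy)).fun_comp φ)

theorem ContinuationGerm.comp_logBranch_of_norm_sub_lt {Ω D₀ : Set ℂ} {f : ℂ → ℂ} {w w' : ℂ}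
    (hφ : Differentiable ℂ φ) (hΩ : logDisk w' ⊆ Ω) (hww' : ‖w - w'‖ < 1 / 2)
    (hw : ContinuationGerm Ω f D₀ (exp w) ↑(fun z ↦ φ (logBranch w z))) :
    ContinuationGerm Ω f D₀ (exp w') ↑(fun z ↦ φ (logBranch w' z)) := by
  have hmem : exp w ∈ logDisk w' := exp_mem_logDisk_of_norm_sub_lt hww'
  have hlog := logBranch_eventuallyEq_logBranch hmem
  rw [logBranch_exp_of_norm_sub_lt_pi (by linarith [Real.pi_gt_three])] at hlog
  have hgerm : (↑(fun z ↦ φ (logBranch w' z)) : Germ (𝓝 (exp w)) ℂ) =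
      ↑(fun z ↦ φ (logBranch w z)) := Germ.coe_eq.2 (hlog.fun_comp φ)
  rw [← hgerm] at hw
  exact hw.extend hΩ (hφ.comp_differentiableOn (differentiableOn_logBranch w')) hmem
    (mem_ball_self (norm_pos_iff.2 (exp_ne_zero w')))

theorem continuationGerm_comp_logBranch (hφ : Differentiable ℂ φ) (hr : 0 < r)
    (hD : ball (1 : ℂ) r ⊆ {0}ᶜ) (w : ℂ) :
    ContinuationGerm {0}ᶜ (fun z ↦ φ (log z)) (ball 1 r) (exp w)
      ↑(fun z ↦ φ (logBranch w z)) := by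
  obtain ⟨N, hN⟩ := exists_nat_gt (2 * ‖w‖)
  have hN₀ : (0 : ℝ) < N := (by positivity : (0 : ℝ) ≤ 2 * ‖w‖).trans_lt hN
  have hsmall : ‖w / N‖ < 1 / 2 := by
    rw [norm_div, norm_natCast, div_lt_iff₀ hN₀]
    linarith
  have hstart : ContinuationGerm {0}ᶜ (fun z ↦ φ (log z)) (ball 1 r) (exp 0)
      ↑(fun z ↦ φ (logBranch 0 z)) := by
    simp only [logBranch_of_exp_eq_one exp_zero, add_zero]
    exact .refl hD (hφ.comp_differentiableOn (differentiableOn_id.clog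
      (ball_one_subset_slitPlane_of_subset_compl_zero hD))) (exp_zero ▸ mem_ball_self hr)
  have hchain (n : ℕ) : ContinuationGerm {0}ᶜ (fun z ↦ φ (log z)) (ball 1 r)
      (exp (n * (w / N))) ↑(fun z ↦ φ (logBranch (n * (w / N)) z)) := by
    induction n with
    | zero => rwa [Nat.cast_zero, zero_mul]
    | succ n ih =>
      refine ih.comp_logBranch_of_norm_sub_lt hφ (logDisk_subset_compl_zero _) ?_
      rwa [← sub_mul, Nat.cast_succ, sub_add_cancel_left, neg_one_mul, norm_neg]
  have hN' : (N : ℂ) ≠ 0 := Nat.cast_ne_zero.2 (Nat.cast_pos.1 hN₀).ne'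
  rw [← mul_div_cancel₀ w hN']
  exact hchain N

theorem continuationGerm_comp_log_iff (hφ : Differentiable ℂ φ) (hr : 0 < r)
    (hD : ball (1 : ℂ) r ⊆ {0}ᶜ) :
    ContinuationGerm {0}ᶜ (fun z ↦ φ (log z)) (ball 1 r) x g ↔
      ∃ w, exp w = x ∧ g = ↑(fun z ↦ φ (logBranch w z)) := by
  refine ⟨fun hg ↦ hg.exists_eq_comp_logBranch hφ hD, ?_⟩
  rintro ⟨w, rfl, rfl⟩
  exact continuationGerm_comp_logBranch hφ hr hD w

theorem continuationGerm_exp_mul_log_one_iff (a : ℂ) (hr : 0 < r) (hD : ball (1 : ℂ) r ⊆ {0}ᶜ)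
    {g : Germ (𝓝 (1 : ℂ)) ℂ} :
    ContinuationGerm {0}ᶜ (fun z ↦ exp (a * log z)) (ball 1 r) 1 g ↔
      ∃ m : ℤ, g = ↑(fun z ↦ exp (2 * Real.pi * I * a) ^ m * exp (a * log z)) := by
  have hbranch (m : ℤ) (z : ℂ) : exp (a * logBranch (m * (2 * Real.pi * I)) z) =
      exp (2 * Real.pi * I * a) ^ m * exp (a * log z) := by
    rw [logBranch_of_exp_eq_one (exp_eq_one_iff.2 ⟨m, rfl⟩), ← exp_int_mul, ← exp_add]
    ring_nf
  rw [continuationGerm_comp_log_iff (φ := fun w ↦ exp (a * w)) (by fun_prop) hr hD]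
  simp only [exp_eq_one_iff, ← hbranch]
  constructor
  · rintro ⟨_, ⟨m, rfl⟩, hg⟩
    exact ⟨m, hg⟩
  · rintro ⟨m, hg⟩
    exact ⟨_, ⟨m, rfl⟩, hg⟩

end CompLog

theorem germ_const_mul_injective {X M : Type*} [TopologicalSpace X] [MulZeroClass M]
    [IsRightCancelMulZero M] {x : X} {f : X → M} (hf : f x ≠ 0) :
    Function.Injective fun c : M ↦ ((fun z ↦ c * f z : X → M) : Germ (𝓝 x) M) :=
  fun _ _ h ↦ mul_right_cancel₀ hf (Germ.coe_eq.1 h).self_of_nhds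

theorem isPrimitiveRoot_exp_intCast_div_natCast (p : ℤ) {q : ℕ} (hq : q ≠ 0) :
    IsPrimitiveRoot (exp (2 * Real.pi * I * (p / q))) (q / Int.gcd p q) := by
  have hden : (p / q : ℚ).den = q / Int.gcd p q := by
    rw [← Int.cast_natCast q, ← Rat.divInt_eq_div, Rat.den_divInt, if_neg (by exact_mod_cast hq),
      Int.natAbs_natCast, Int.gcd_comm]
  simpa [hden] using isPrimitiveRoot_exp_rat (p / q)

theorem image_pow_Iio_of_isPrimitiveRoot {R : Type*} [CommRing R] [IsDomain R] {ζ : R} {n N : ℕ}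
    (h : IsPrimitiveRoot ζ n) (hn : n ≠ 0) (hnN : n ≤ N) : (ζ ^ ·) '' Iio N = {z | z ^ n = 1} := by
  have : NeZero n := ⟨hn⟩
  ext z
  constructor
  · rintro ⟨j, -, rfl⟩
    rw [mem_ofPred_eq, pow_right_comm, h.pow_eq_one, one_pow]
  · intro hz
    obtain ⟨j, hj, rfl⟩ := h.eq_pow_of_pow_eq_one hz
    exact ⟨j, hj.trans_le hnN, rfl⟩

theorem range_zpow_of_isPrimitiveRoot {K : Type*} [Field K] {ζ : K} {n : ℕ}
    (h : IsPrimitiveRoot ζ n) (hn : n ≠ 0) : range (fun m : ℤ ↦ ζ ^ m) = {z | z ^ n = 1} := by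
  have : NeZero n := ⟨hn⟩
  ext z
  constructor
  · rintro ⟨m, rfl⟩
    rw [mem_ofPred_eq, ← zpow_natCast, zpow_comm, zpow_natCast, h.pow_eq_one, one_zpow]
  · intro hz
    obtain ⟨j, -, rfl⟩ := h.eq_pow_of_pow_eq_one hz
    exact ⟨j, zpow_natCast ζ j⟩

theorem ncard_setOf_pow_eq_one {R : Type*} [CommRing R] [IsDomain R] {ζ : R} {n : ℕ}
    (h : IsPrimitiveRoot ζ n) (hn : n ≠ 0) : {z : R | z ^ n = 1}.ncard = n := by
  rw [← image_pow_Iio_of_isPrimitiveRoot h hn le_rfl, ← Finset.coe_range,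
    h.injOn_pow.ncard_image, ncard_coe_finset, Finset.card_range]

theorem determinations_rational_power_general (p : ℤ) (q : ℕ) (hq : 1 ≤ q) (r : ℝ) (hr : 0 < r)
    (hD : ball (1 : ℂ) r ⊆ ({0}ᶜ : Set ℂ)) :
    {g : Germ (𝓝 (1 : ℂ)) ℂ |
        ContinuationGerm ({0}ᶜ) (fun x ↦ exp ((p / q : ℂ) * log x)) (ball (1 : ℂ) r) 1 g} =
      {g : Germ (𝓝 (1 : ℂ)) ℂ | ∃ j : ℕ, j < q ∧
        g = ↑(fun x : ℂ ↦ exp (2 * Real.pi * I * p * j / q) * exp ((p / q : ℂ) * log x))} ∧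
    {g : Germ (𝓝 (1 : ℂ)) ℂ |
        ContinuationGerm ({0}ᶜ) (fun x ↦ exp ((p / q : ℂ) * log x)) (ball (1 : ℂ) r) 1 g}.ncard =
      q / Int.gcd p q := by
  set ζ := exp (2 * Real.pi * I * (p / q : ℂ)) with hζ
  set d := q / Int.gcd p q
  let scaledGerm (c : ℂ) : Germ (𝓝 (1 : ℂ)) ℂ := ↑(fun x ↦ c * exp ((p / q : ℂ) * log x))
  have hprim : IsPrimitiveRoot ζ d := isPrimitiveRoot_exp_intCast_div_natCast p (by lia)
  have hd₀ : d ≠ 0 := (Nat.div_pos (Nat.le_of_dvd hq (Int.gcd_dvd_natAbs_right p q))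
    (Int.gcd_pos_of_ne_zero_right p (by lia))).ne'
  have hpow (j : ℕ) : exp (2 * Real.pi * I * p * j / q) = ζ ^ j := by
    rw [hζ, ← exp_nat_mul]
    ring_nf
  have hcont : {g | ContinuationGerm {0}ᶜ (fun x ↦ exp ((p / q : ℂ) * log x)) (ball 1 r) 1 g} =
      scaledGerm '' {z | z ^ d = 1} := by
    rw [← range_zpow_of_isPrimitiveRoot hprim hd₀, ← range_comp]
    ext g
    exact (continuationGerm_exp_mul_log_one_iff _ hr hD).trans (exists_congr fun m ↦ eq_comm)
  have hdet : {g | ∃ j : ℕ, j < q ∧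
      g = ↑(fun x : ℂ ↦ exp (2 * Real.pi * I * p * j / q) * exp ((p / q : ℂ) * log x))} =
      scaledGerm '' {z | z ^ d = 1} := by
    rw [← image_pow_Iio_of_isPrimitiveRoot hprim hd₀ (Nat.div_le_self _ _), image_image]
    ext g
    simp only [hpow]
    exact exists_congr fun j ↦ and_congr_right fun _ ↦ eq_comm
  have hinj : scaledGerm.Injective := germ_const_mul_injective (exp_ne_zero _)
  rw [hcont, hdet, ncard_image_of_injective _ hinj]
  exact ⟨rfl, ncard_setOf_pow_eq_one hprim hd₀⟩

/-- **Determinations of `x^{p/q}`.**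
For `α = p/q` in lowest terms (`q ≥ 1`), the germs at `1` obtained from
`f(x) = exp(α Log x)` by analytic continuation along chains of disks in `ℂ ∖ {0}` are
exactly the germs of `x ↦ exp(2πi·p·j/q)·exp(α Log x)` for `j = 0, …, q−1`;
in particular there are exactly `q` of them. -/
theorem determinations_rational_power (p : ℤ) (q : ℕ) (hq : 1 ≤ q)
    (hgcd : Int.gcd p (q : ℤ) = 1) (r : ℝ) (hr : 0 < r)
    (hD : Metric.ball (1 : ℂ) r ⊆ ({0}ᶜ : Set ℂ)) :
    {g : Filter.Germ (nhds (1 : ℂ)) ℂ |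
        ContinuationGerm ({0}ᶜ) (fun x => Complex.exp ((p / q : ℂ) * Complex.log x))
          (Metric.ball (1 : ℂ) r) 1 g} =
      {g : Filter.Germ (nhds (1 : ℂ)) ℂ | ∃ j : ℕ, j < q ∧
        g = ↑(fun x : ℂ => Complex.exp (2 * Real.pi * Complex.I * p * j / q) *
          Complex.exp ((p / q : ℂ) * Complex.log x))} ∧
    {g : Filter.Germ (nhds (1 : ℂ)) ℂ |
        ContinuationGerm ({0}ᶜ) (fun x => Complex.exp ((p / q : ℂ) * Complex.log x))
          (Metric.ball (1 : ℂ) r) 1 g}.ncard = q := by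
  simpa only [hgcd, Nat.div_one] using determinations_rational_power_general p q hq r hr hD
end

section
/- Let k ≥ 1 be an integer, let c ∈ ℂ, let x₀ ∈ ℂ ∖ {c}, and let f be a holomorphic function on an open disk D₀ ⊆ Ω := ℂ ∖ {c} centered at x₀ satisfying f(x)^k = c − x for all x ∈ D₀. Then the set S of germs at x₀ obtained from f by analytic continuation along a chain of disks in Ω is exactly { germ at x₀ of ζ·f : ζ ∈ ℂ, ζ^k = 1 }; in particular S has exactly k elements, and every g ∈ S satisfies g(x)^k = c − x near x₀. -/
open Filter Metric Set

/-!
A holomorphic relation `Φ (x, f x) = 0` survives analytic continuation, by the identity theorem.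
Hence every continuation of `f` is again a `k`-th root of `c - x`, and near `x₀` its quotient by
`f` is continuous with values in the finite set of `k`-th roots of unity, so constant. Conversely,
near `x₀` the function `f` coincides with `f x₀ * ((x - c) / (x₀ - c)) ^ (1 / k)`, and continuing
`x ↦ (x - c) ^ s` around `c`, through four overlapping disks per turn, multiplies it by
`exp (2 * π * I * s)`; for `s = 1 / k` this factor is a primitive `k`-th root of unity.
-/

/-- A function element over `Ω`: a holomorphic function on an open disk contained in `Ω`. The
values of `toFun` outside the disk carry no information. -/
structure FunctionElement (Ω : Set ℂ) where
  center : ℂ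
  radius : ℝ
  toFun : ℂ → ℂ
  radius_pos : 0 < radius
  ball_subset : ball center radius ⊆ Ω
  differentiableOn : DifferentiableOn ℂ toFun (ball center radius)

namespace FunctionElement

variable {Ω : Set ℂ} {e e' : FunctionElement Ω}

/-- The disk on which a function element is holomorphic. -/
def disk (e : FunctionElement Ω) : Set ℂ := ball e.center e.radius

lemma isOpen_disk (e : FunctionElement Ω) : IsOpen e.disk := isOpen_ball

lemma convex_disk (e : FunctionElement Ω) : Convex ℝ e.disk := convex_ball _ _

lemma center_mem_disk (e : FunctionElement Ω) : e.center ∈ e.disk := mem_ball_self e.radius_pos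

/-- Direct analytic continuation: the two disks meet and the two functions agree on the overlap. -/
def IsDirectContinuation (e e' : FunctionElement Ω) : Prop :=
  (e.disk ∩ e'.disk).Nonempty ∧ EqOn e.toFun e'.toFun (e.disk ∩ e'.disk)

/-- Analytic continuation along a finite chain of disks in `Ω`. -/
abbrev IsContinuation (e e' : FunctionElement Ω) : Prop :=
  Relation.ReflTransGen IsDirectContinuation e e'

lemma IsDirectContinuation.eqOn_zero {Φ : ℂ × ℂ → ℂ} (hΦ : DifferentiableOn ℂ Φ (Ω ×ˢ univ))
    (h : IsDirectContinuation e e') (he : EqOn (fun x ↦ Φ (x, e.toFun x)) 0 e.disk) :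
    EqOn (fun x ↦ Φ (x, e'.toFun x)) 0 e'.disk := by
  obtain ⟨⟨a, ha⟩, heq⟩ := h
  have hanalytic : AnalyticOnNhd ℂ (fun x ↦ Φ (x, e'.toFun x)) e'.disk :=
    (hΦ.comp (differentiableOn_id.prodMk e'.differentiableOn)
      fun x hx ↦ ⟨e'.ball_subset hx, mem_univ _⟩).analyticOnNhd e'.isOpen_disk
  refine hanalytic.eqOn_zero_of_preconnected_of_eventuallyEq_zero e'.convex_disk.isPreconnected
    ha.2 ?_
  filter_upwards [(e.isOpen_disk.inter e'.isOpen_disk).mem_nhds ha] with x hx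
  rw [← heq hx]
  exact he hx.1

theorem IsContinuation.eqOn_zero {Φ : ℂ × ℂ → ℂ} (hΦ : DifferentiableOn ℂ Φ (Ω ×ˢ univ))
    (h : IsContinuation e e') (he : EqOn (fun x ↦ Φ (x, e.toFun x)) 0 e.disk) :
    EqOn (fun x ↦ Φ (x, e'.toFun x)) 0 e'.disk := by
  induction h with
  | refl => exact he
  | tail _ hstep ih => exact hstep.eqOn_zero hΦ ih

end FunctionElement

lemma reflTransGen_iff_exists_relSeries {α : Type*} {r : SetRel α α} {a b : α} :
    Relation.ReflTransGen (fun x y ↦ (x, y) ∈ r) a b ↔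
      ∃ p : RelSeries r, p.head = a ∧ p.last = b := by
  constructor
  · intro h
    induction h with
    | refl => exact ⟨RelSeries.singleton r a, rfl, rfl⟩
    | @tail b d _ hbd ih =>
      obtain ⟨p, hhead, rfl⟩ := ih
      exact ⟨p.snoc d hbd, by simpa using hhead, by simp⟩
  · rintro ⟨p, rfl, rfl⟩
    have hreach (i : Fin (p.length + 1)) :
        Relation.ReflTransGen (fun x y ↦ (x, y) ∈ r) p.head (p i) := by
      induction i using Fin.induction with
      | zero => exact .refl
      | succ i ih => exact ih.tail (p.step i)
    exact hreach (Fin.last _)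

open FunctionElement in
theorem continuationGerm_iff {Ω : Set ℂ} (e : FunctionElement Ω) {x₁ : ℂ}
    {g : Germ (nhds x₁) ℂ} :
    ContinuationGerm Ω e.toFun e.disk x₁ g ↔
      ∃ e', IsContinuation e e' ∧ x₁ ∈ e'.disk ∧ g = ↑e'.toFun := by
  let r : SetRel (FunctionElement Ω) (FunctionElement Ω) := {p | IsDirectContinuation p.1 p.2}
  constructor
  · rintro ⟨n, D, F, hD₀, hF₀, hDF, hstep, hx₁, rfl⟩
    choose a ρ hρ hD using fun j ↦ (hDF j).1
    obtain rfl : D = fun j ↦ ball (a j) (ρ j) := funext hD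
    let E (j : Fin (n + 1)) : FunctionElement Ω :=
      ⟨a j, ρ j, F j, hρ j, (hDF j).2.1, (hDF j).2.2⟩
    have hfirst : IsDirectContinuation e (E 0) := by
      have hdisk : (E 0).disk = e.disk := hD₀
      rw [IsDirectContinuation, hdisk, inter_self]
      exact ⟨⟨_, e.center_mem_disk⟩, hF₀.symm⟩
    have hchain : IsContinuation (E 0) (E (Fin.last n)) :=
      reflTransGen_iff_exists_relSeries (r := r).2 ⟨⟨n, E, hstep⟩, rfl, rfl⟩
    exact ⟨E (Fin.last n), hchain.head hfirst, hx₁, rfl⟩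
  · rintro ⟨e', he', hx₁, rfl⟩
    obtain ⟨p, rfl, rfl⟩ := reflTransGen_iff_exists_relSeries (r := r).1 he'
    exact ⟨p.length, fun j ↦ (p j).disk, fun j ↦ (p j).toFun, rfl, fun _ _ ↦ rfl,
      fun j ↦ ⟨⟨_, _, (p j).radius_pos, rfl⟩, (p j).ball_subset, (p j).differentiableOn⟩,
      p.step, hx₁, rfl⟩

lemma exists_eqOn_mul_of_pow_eq_pow {X 𝕜 : Type*} [TopologicalSpace X] [Field 𝕜]
    [TopologicalSpace 𝕜] [T1Space 𝕜] [ContinuousMul 𝕜] [ContinuousInv₀ 𝕜] {S : Set X}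
    (hS : IsPreconnected S) {u v : X → 𝕜} (hu : ContinuousOn u S) (hv : ContinuousOn v S)
    (hv₀ : ∀ x ∈ S, v x ≠ 0) {k : ℕ} (hk : k ≠ 0) (huv : ∀ x ∈ S, u x ^ k = v x ^ k) :
    ∃ ζ : 𝕜, ζ ^ k = 1 ∧ EqOn u (fun x ↦ ζ * v x) S := by
  have hmaps : MapsTo (u / v) S {ζ : 𝕜 | ζ ^ k = 1} := fun x hx ↦ by
    rw [mem_ofPred_eq, Pi.div_apply, div_pow, huv x hx, div_self (pow_ne_zero k (hv₀ x hx))]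
  have hfinite : {ζ : 𝕜 | ζ ^ k = 1}.Finite := by
    rw [← Polynomial.nthRootsFinset_toSet (Nat.pos_of_ne_zero hk)]
    exact Finset.finite_toSet _
  obtain ⟨ζ, hζ, hconst⟩ := hS.eqOn_const_of_mapsTo hfinite.isDiscrete (hu.div hv hv₀) hmaps
    ⟨1, one_pow k⟩
  exact ⟨ζ, hζ, fun x hx ↦ (div_eq_iff (hv₀ x hx)).1 (hconst hx)⟩

section Monodromy

open FunctionElement

variable {b c x : ℂ}

lemma re_div_pos_of_mem_ball (hx : x ∈ ball (c + b) ‖b‖) : 0 < ((x - c) / b).re := by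
  have hb : 0 < ‖b‖ := pos_of_mem_ball hx
  have hnorm : ‖1 - (x - c) / b‖ < 1 := by
    rw [one_sub_div (norm_pos_iff.1 hb), norm_div, div_lt_one hb, norm_sub_rev, sub_sub]
    exact mem_ball_iff_norm.1 hx
  have hre := (Complex.re_le_norm _).trans_lt hnorm
  rw [Complex.sub_re, Complex.one_re] at hre
  linarith

/-- The branch `y * ((x - c) / b) ^ s` of a multiple of `(x - c) ^ s` that takes the value `y` at
`c + b`, on the largest disk around `c + b` that omits `c`. -/
noncomputable def powerElement (c s b : ℂ) (hb : b ≠ 0) (y : ℂ) : FunctionElement {c}ᶜ where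
  center := c + b
  radius := ‖b‖
  toFun x := y * ((x - c) / b) ^ s
  radius_pos := norm_pos_iff.2 hb
  ball_subset := fun x hx hxc ↦ by
    simpa [mem_singleton_iff.1 hxc] using re_div_pos_of_mem_ball hx
  differentiableOn := fun x hx ↦ by
    have hslit : (x - c) / b ∈ Complex.slitPlane := .inl (re_div_pos_of_mem_ball hx)
    have hbase : DifferentiableAt ℂ (fun x ↦ (x - c) / b) x := by fun_prop
    exact ((hbase.cpow_const hslit).const_mul y).differentiableWithinAt

-- Since `|arg w| < π / 2`, dividing by `I` does not cross the branch cut of the logarithm.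
lemma cpow_eq_exp_mul_div_I_cpow {w : ℂ} (hw : 0 < w.re) (s : ℂ) :
    w ^ s = Complex.exp (Real.pi / 2 * Complex.I * s) * (w / Complex.I) ^ s := by
  have hw₀ : w ≠ 0 := by
    rintro rfl
    exact hw.false
  have harg := abs_lt.1 (Complex.abs_arg_lt_pi_div_two_iff.2 (.inl hw))
  have hlog : Complex.log (w / Complex.I) = Complex.log w - Real.pi / 2 * Complex.I := by
    rw [div_eq_mul_inv, Complex.inv_I,
      Complex.log_mul hw₀ (neg_ne_zero.2 Complex.I_ne_zero), Complex.log_neg_I]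
    · ring
    · rw [Complex.arg_neg_I]
      constructor <;> linarith [Real.pi_pos]
  rw [Complex.cpow_def_of_ne_zero hw₀,
    Complex.cpow_def_of_ne_zero (div_ne_zero hw₀ Complex.I_ne_zero), hlog, ← Complex.exp_add]
  ring_nf

lemma nonempty_ball_inter_ball_mul_I (c : ℂ) (hb : b ≠ 0) :
    (ball (c + b) ‖b‖ ∩ ball (c + b * Complex.I) ‖b * Complex.I‖).Nonempty := by
  have hnorm : ‖b * ((1 - Complex.I) / 2)‖ < ‖b‖ := by
    have hsq : ‖(1 - Complex.I) / 2‖ ^ 2 = 1 / 2 := by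
      rw [Complex.sq_norm, Complex.normSq_apply]
      norm_num
    rw [norm_mul]
    exact mul_lt_of_lt_one_right (norm_pos_iff.2 hb) (by nlinarith)
  refine ⟨c + b * ((1 + Complex.I) / 2), ?_, ?_⟩
  · rw [mem_ball', dist_eq_norm]
    rwa [show c + b - (c + b * ((1 + Complex.I) / 2)) = b * ((1 - Complex.I) / 2) by ring]
  · rw [mem_ball, dist_eq_norm, norm_mul b Complex.I, Complex.norm_I, mul_one]
    rwa [show c + b * ((1 + Complex.I) / 2) - (c + b * Complex.I) =
      b * ((1 - Complex.I) / 2) by ring]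

lemma powerElement_isDirectContinuation_quarter_turn (c s : ℂ) (hb : b ≠ 0) (y : ℂ) :
    IsDirectContinuation (powerElement c s b hb y)
      (powerElement c s (b * Complex.I) (mul_ne_zero hb Complex.I_ne_zero)
        (y * Complex.exp (Real.pi / 2 * Complex.I * s))) := by
  refine ⟨nonempty_ball_inter_ball_mul_I c hb, fun x hx ↦ ?_⟩
  simp only [powerElement]
  rw [cpow_eq_exp_mul_div_I_cpow (re_div_pos_of_mem_ball hx.1), div_div, ← mul_assoc]

lemma powerElement_isContinuation_quarter_turns (c s : ℂ) (hb : b ≠ 0) (y : ℂ) (n : ℕ) :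
    IsContinuation (powerElement c s b hb y)
      (powerElement c s (b * Complex.I ^ n) (mul_ne_zero hb (pow_ne_zero n Complex.I_ne_zero))
        (y * Complex.exp (Real.pi / 2 * Complex.I * s) ^ n)) := by
  induction n with
  | zero => simpa only [pow_zero, mul_one] using .refl
  | succ n ih =>
    simpa only [pow_succ, mul_assoc] using
      ih.tail (powerElement_isDirectContinuation_quarter_turn c s _ _)

theorem powerElement_isContinuation_full_turns (c s : ℂ) (hb : b ≠ 0) (y : ℂ) (m : ℕ) :
    IsContinuation (powerElement c s b hb y)
      (powerElement c s b hb (y * Complex.exp (2 * Real.pi * Complex.I * s) ^ m)) := by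
  have hexp : Complex.exp (Real.pi / 2 * Complex.I * s) ^ 4 =
      Complex.exp (2 * Real.pi * Complex.I * s) := by
    rw [← Complex.exp_nat_mul]
    ring_nf
  simpa only [pow_mul, Complex.I_pow_four, one_pow, mul_one, hexp] using
    powerElement_isContinuation_quarter_turns c s hb y (4 * m)

end Monodromy

section KthRoot

open FunctionElement

variable {k : ℕ} {c x₀ : ℂ} {e e' : FunctionElement {c}ᶜ}

lemma FunctionElement.toFun_ne_zero_of_pow_eq_sub (hk : k ≠ 0)
    (he : ∀ x ∈ e.disk, e.toFun x ^ k = c - x) : ∀ x ∈ e.disk, e.toFun x ≠ 0 := by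
  intro x hx hzero
  have hcx := he x hx
  rw [hzero, zero_pow hk] at hcx
  exact e.ball_subset hx (sub_eq_zero.1 hcx.symm).symm

lemma FunctionElement.exists_eqOn_mul_of_pow_eq_sub (hk : k ≠ 0)
    (he : ∀ x ∈ e.disk, e.toFun x ^ k = c - x) (he' : ∀ x ∈ e'.disk, e'.toFun x ^ k = c - x) :
    ∃ ζ : ℂ, ζ ^ k = 1 ∧ EqOn e'.toFun (fun x ↦ ζ * e.toFun x) (e.disk ∩ e'.disk) :=
  exists_eqOn_mul_of_pow_eq_pow (e.convex_disk.inter e'.convex_disk).isPreconnected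
    (e'.differentiableOn.continuousOn.mono inter_subset_right)
    (e.differentiableOn.continuousOn.mono inter_subset_left)
    (fun x hx ↦ toFun_ne_zero_of_pow_eq_sub hk he x hx.1) hk
    fun x hx ↦ (he' x hx.2).trans (he x hx.1).symm

lemma FunctionElement.IsContinuation.pow_eq_sub (h : IsContinuation e e')
    (he : ∀ x ∈ e.disk, e.toFun x ^ k = c - x) : ∀ x ∈ e'.disk, e'.toFun x ^ k = c - x := by
  have hΦ : Differentiable ℂ fun p : ℂ × ℂ ↦ p.2 ^ k - (c - p.1) := by fun_prop
  intro x hx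
  exact sub_eq_zero.1 (h.eqOn_zero hΦ.differentiableOn (fun z hz ↦ sub_eq_zero.2 (he z hz)) hx)

lemma powerElement_inv_pow_eq_sub (hk : k ≠ 0) (hb : x₀ - c ≠ 0) {y : ℂ} (hy : y ^ k = c - x₀)
    (x : ℂ) : (powerElement c (k : ℂ)⁻¹ (x₀ - c) hb y).toFun x ^ k = c - x := by
  simp only [powerElement]
  rw [mul_pow, Complex.cpow_nat_inv_pow _ hk, hy, ← neg_sub x₀ c, neg_mul, mul_div_cancel₀ _ hb,
    neg_sub]

lemma powerElement_toFun_base (s : ℂ) (hb : x₀ - c ≠ 0) (y : ℂ) :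
    (powerElement c s (x₀ - c) hb y).toFun x₀ = y := by
  simp only [powerElement]
  rw [div_self hb, Complex.one_cpow, mul_one]

lemma mem_disk_powerElement (s : ℂ) (hb : x₀ - c ≠ 0) (y : ℂ) :
    x₀ ∈ (powerElement c s (x₀ - c) hb y).disk := by
  simpa only [powerElement, add_sub_cancel] using (powerElement c s (x₀ - c) hb y).center_mem_disk

lemma FunctionElement.eqOn_powerElement_of_pow_eq_sub (hk : k ≠ 0)
    (he : ∀ x ∈ e.disk, e.toFun x ^ k = c - x) (hx₀ : x₀ ∈ e.disk) (hb : x₀ - c ≠ 0) :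
    EqOn e.toFun (powerElement c (k : ℂ)⁻¹ (x₀ - c) hb (e.toFun x₀)).toFun
      (e.disk ∩ (powerElement c (k : ℂ)⁻¹ (x₀ - c) hb (e.toFun x₀)).disk) := by
  obtain ⟨ζ, -, hζ⟩ := exists_eqOn_mul_of_pow_eq_sub hk he
    fun x _ ↦ powerElement_inv_pow_eq_sub hk hb (he x₀ hx₀) x
  have hζ_one : ζ = 1 := by
    have hbase := hζ ⟨hx₀, mem_disk_powerElement _ hb _⟩
    rw [powerElement_toFun_base] at hbase
    exact (mul_eq_right₀ (toFun_ne_zero_of_pow_eq_sub hk he x₀ hx₀)).1 hbase.symm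
  simpa only [hζ_one, one_mul] using hζ.symm

theorem ContinuationGerm.exists_eq_mul (hk : k ≠ 0) (he : ∀ x ∈ e.disk, e.toFun x ^ k = c - x)
    (hx₀ : x₀ ∈ e.disk) {g : Germ (nhds x₀) ℂ}
    (hg : ContinuationGerm {c}ᶜ e.toFun e.disk x₀ g) :
    ∃ ζ : ℂ, ζ ^ k = 1 ∧ g = ↑(fun x ↦ ζ * e.toFun x) := by
  obtain ⟨e', hcont, hx₀', rfl⟩ := (continuationGerm_iff e).1 hg
  obtain ⟨ζ, hζ, heq⟩ := exists_eqOn_mul_of_pow_eq_sub hk he (hcont.pow_eq_sub he)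
  exact ⟨ζ, hζ, Germ.coe_eq.2
    (heq.eventuallyEq_of_mem ((e.isOpen_disk.inter e'.isOpen_disk).mem_nhds ⟨hx₀, hx₀'⟩))⟩

theorem continuationGerm_mul_of_pow_eq_one (hk : k ≠ 0)
    (he : ∀ x ∈ e.disk, e.toFun x ^ k = c - x) (hx₀ : x₀ ∈ e.disk) {ζ : ℂ} (hζ : ζ ^ k = 1) :
    ContinuationGerm {c}ᶜ e.toFun e.disk x₀ ↑(fun x ↦ ζ * e.toFun x) := by
  have hb : x₀ - c ≠ 0 := sub_ne_zero.2 (e.ball_subset hx₀)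
  have : NeZero k := ⟨hk⟩
  obtain ⟨m, -, rfl⟩ := (Complex.isPrimitiveRoot_exp k hk).eq_pow_of_pow_eq_one hζ
  let p (y : ℂ) : FunctionElement {c}ᶜ := powerElement c (k : ℂ)⁻¹ (x₀ - c) hb y
  have hx₀p (y : ℂ) : x₀ ∈ (p y).disk := mem_disk_powerElement _ hb y
  have heq : EqOn e.toFun (p (e.toFun x₀)).toFun (e.disk ∩ (p (e.toFun x₀)).disk) :=
    eqOn_powerElement_of_pow_eq_sub hk he hx₀ hb
  have hturn := powerElement_isContinuation_full_turns c (k : ℂ)⁻¹ hb (e.toFun x₀) m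
  refine (continuationGerm_iff e).2 ⟨_, hturn.head ⟨⟨x₀, hx₀, hx₀p _⟩, heq⟩, hx₀p _, ?_⟩
  refine Germ.coe_eq.2 ?_
  filter_upwards [(e.isOpen_disk.inter (p (e.toFun x₀)).isOpen_disk).mem_nhds ⟨hx₀, hx₀p _⟩]
    with x hx
  rw [heq hx, div_eq_mul_inv]
  simp only [p, powerElement]
  ring

end KthRoot

lemma ncard_germ_rootOfUnity_mul {X R : Type*} [TopologicalSpace X] [CommRing R] [IsDomain R]
    {k : ℕ} {ω : R} (hω : IsPrimitiveRoot ω k) (hk : k ≠ 0) {x₀ : X} {f : X → R}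
    (hf : f x₀ ≠ 0) :
    {g : Germ (nhds x₀) R | ∃ ζ : R, ζ ^ k = 1 ∧ g = ↑(fun x ↦ ζ * f x)}.ncard = k := by
  have himage : {g : Germ (nhds x₀) R | ∃ ζ : R, ζ ^ k = 1 ∧ g = ↑(fun x ↦ ζ * f x)} =
      (fun ζ : R ↦ (↑(fun x ↦ ζ * f x) : Germ (nhds x₀) R)) ''
        (Polynomial.nthRootsFinset k (1 : R) : Set R) := by
    rw [Polynomial.nthRootsFinset_toSet (Nat.pos_of_ne_zero hk)]
    ext g
    exact exists_congr fun ζ ↦ and_congr_right fun _ ↦ eq_comm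
  rw [himage, InjOn.ncard_image, ncard_coe_finset, hω.card_nthRootsFinset]
  exact fun ζ _ ξ _ h ↦ mul_right_cancel₀ hf (Germ.coe_eq.1 h).eq_of_nhds

/-- **Determinations of `(c − x)^{1/k}`.**
Let `f` be holomorphic on a disk `D₀ ⊆ ℂ ∖ {c}` centered at `x₀` with `f(x)^k = c − x`.
The germs at `x₀` obtained from `f` by analytic continuation along chains of disks in
`ℂ ∖ {c}` are exactly the germs of `ζ·f` for the `k`-th roots of unity `ζ`; in particular
there are exactly `k` of them, and each of them satisfies `g(x)^k = c − x` near `x₀`. -/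
theorem determinations_kth_root (k : ℕ) (hk : 1 ≤ k) (c x₀ : ℂ) (hx₀ : x₀ ≠ c)
    (r : ℝ) (hr : 0 < r) (hD : Metric.ball x₀ r ⊆ ({c}ᶜ : Set ℂ))
    (f : ℂ → ℂ) (hf : DifferentiableOn ℂ f (Metric.ball x₀ r))
    (hfk : ∀ x ∈ Metric.ball x₀ r, f x ^ k = c - x) :
    {g : Filter.Germ (nhds x₀) ℂ |
        ContinuationGerm ({c}ᶜ) f (Metric.ball x₀ r) x₀ g} =
      {g : Filter.Germ (nhds x₀) ℂ | ∃ ζ : ℂ, ζ ^ k = 1 ∧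
        g = ↑(fun x : ℂ => ζ * f x)} ∧
    {g : Filter.Germ (nhds x₀) ℂ |
        ContinuationGerm ({c}ᶜ) f (Metric.ball x₀ r) x₀ g}.ncard = k ∧
    ∀ g ∈ {g : Filter.Germ (nhds x₀) ℂ |
        ContinuationGerm ({c}ᶜ) f (Metric.ball x₀ r) x₀ g},
      g ^ k = ↑(fun x : ℂ => c - x) := by
  have hk₀ : k ≠ 0 := Nat.one_le_iff_ne_zero.1 hk
  let e : FunctionElement {c}ᶜ := ⟨x₀, r, f, hr, hD, hf⟩
  have hx₀e : x₀ ∈ e.disk := e.center_mem_disk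
  have hset : {g : Germ (nhds x₀) ℂ | ContinuationGerm {c}ᶜ f (ball x₀ r) x₀ g} =
      {g | ∃ ζ : ℂ, ζ ^ k = 1 ∧ g = ↑(fun x ↦ ζ * f x)} := by
    ext g
    refine ⟨ContinuationGerm.exists_eq_mul (e := e) hk₀ hfk hx₀e, ?_⟩
    rintro ⟨ζ, hζ, rfl⟩
    exact continuationGerm_mul_of_pow_eq_one (e := e) hk₀ hfk hx₀e hζ
  refine ⟨hset, ?_, fun g hg ↦ ?_⟩
  · rw [hset]
    exact ncard_germ_rootOfUnity_mul (Complex.isPrimitiveRoot_exp k hk₀) hk₀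
      (FunctionElement.toFun_ne_zero_of_pow_eq_sub (e := e) hk₀ hfk x₀ hx₀e)
  · obtain ⟨e', hcont, hx₀e', rfl⟩ := (continuationGerm_iff e).1 hg
    exact Germ.coe_eq.2 (eventually_of_mem (e'.isOpen_disk.mem_nhds hx₀e')
      (hcont.pow_eq_sub hfk))
end

section
/- Let ζ₁, ζ₂, ζ₃ ∈ ℂ be pairwise distinct, let α₁, α₂, α₃ ∈ ℂ, set Ω := ℂ ∖ {ζ₁, ζ₂, ζ₃}, let x₀ ∈ Ω, and let f be a holomorphic function on an open disk D₀ ⊆ Ω centered at x₀ satisfying f′(x) = α₁/(x−ζ₁) + α₂/(x−ζ₂) + α₃/(x−ζ₃) on D₀. Then the set of germs at x₀ obtained from f by analytic continuation along a chain of disks in Ω is exactly { germ at x₀ of f + 2πi·(n₁α₁ + n₂α₂ + n₃α₃) : n₁, n₂, n₃ ∈ ℤ }; in other words, two determinations of f over x₀ differ by a constant belonging to the additive group G = 2πi(α₁ℤ + α₂ℤ + α₃ℤ), and every element of G is realized by some continuation. -/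
open Filter Metric Set

/-!
The germs obtained from `f` are governed by the increments that primitives of
`ω = ∑ i, α i / (z - ζ i)` acquire along chains of disks: two determinations over `x₀` differ by a
period of `ω`, that is, by the increment along a closed chain. On a disk avoiding the poles a
primitive of `1 / (z - ζ i)` is a logarithm of `z - ζ i` up to a constant, so the increment along a
chain from `x` to `y` is `∑ i, α i * l i` with `exp (l i) = (y - ζ i) / (x - ζ i)`; for `x = y` each
`l i` lies in `2πi ℤ`. Conversely, a small circle around `ζ i` has increment `2πi α i`, and since
the complement of the poles is connected, periods do not depend on the base point.
-/

open scoped Topology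

section Primitives

variable {𝕜 E : Type*} [RCLike 𝕜] [NormedAddCommGroup E] [NormedSpace 𝕜 E]

lemma sub_eq_sub_of_hasDerivAt_eq {U : Set 𝕜} (hU : IsOpen U) (hUc : IsPreconnected U)
    {F G F' : 𝕜 → E} (hF : ∀ z ∈ U, HasDerivAt F (F' z) z) (hG : ∀ z ∈ U, HasDerivAt G (F' z) z)
    {x y : 𝕜} (hx : x ∈ U) (hy : y ∈ U) : F y - F x = G y - G x := by
  have hFG : ∀ z ∈ U, HasDerivAt (F - G) 0 z := fun z hz => by
    simpa using (hF z hz).sub (hG z hz)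
  have hconst : (F - G) y = (F - G) x := hU.is_const_of_deriv_eq_zero hUc
    (fun z hz => (hFG z hz).differentiableAt.differentiableWithinAt)
    (fun z hz => (hFG z hz).deriv) hy hx
  rw [Pi.sub_apply, Pi.sub_apply] at hconst
  exact sub_eq_sub_iff_sub_eq_sub.mpr hconst

lemma eventuallyEq_of_hasDerivAt_eq {F G F' : 𝕜 → E} {y : 𝕜}
    (hF : ∀ᶠ z in 𝓝 y, HasDerivAt F (F' z) z) (hG : ∀ᶠ z in 𝓝 y, HasDerivAt G (F' z) z)
    (hy : F y = G y) : F =ᶠ[𝓝 y] G := by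
  obtain ⟨ε, hε, hball⟩ := Metric.eventually_nhds_iff_ball.mp (hF.and hG)
  filter_upwards [ball_mem_nhds y hε] with z hz
  have hsub := sub_eq_sub_of_hasDerivAt_eq isOpen_ball
    isPreconnected_ball
    (fun z hz => (hball z hz).1) (fun z hz => (hball z hz).2) (mem_ball_self hε) hz
  rwa [hy, sub_left_inj] at hsub

end Primitives

lemma hasDerivAt_of_eventually_hasDerivAt {U : Set ℂ} (hU : IsOpen U) (hUc : IsPreconnected U)
    {ω F : ℂ → ℂ} (hω : DifferentiableOn ℂ ω U) (hF : DifferentiableOn ℂ F U) {y : ℂ} (hy : y ∈ U)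
    (hFy : ∀ᶠ z in 𝓝 y, HasDerivAt F (ω z) z) : ∀ z ∈ U, HasDerivAt F (ω z) z := by
  have hderiv : EqOn (deriv F) ω U :=
    (hF.analyticOnNhd hU).deriv.eqOn_of_preconnected_of_eventuallyEq (hω.analyticOnNhd hU) hUc hy
      (hFy.mono fun _ h => h.deriv)
  intro z hz
  exact hderiv hz ▸ (hF.differentiableAt (hU.mem_nhds hz)).hasDerivAt

/-- `ContinuationIncrement Ω ω x y v`: a primitive of `ω` can be continued along a chain of disks
in `Ω` from `x` to `y` in such a way that its value grows by `v`. Recording increments rather than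
values makes the notion independent of the primitive one starts from. -/
inductive ContinuationIncrement (Ω : Set ℂ) (ω : ℂ → ℂ) (x : ℂ) : ℂ → ℂ → Prop
  | refl : ContinuationIncrement Ω ω x x 0
  | tail {y z v c : ℂ} {s : ℝ} {F : ℂ → ℂ} (h : ContinuationIncrement Ω ω x y v)
      (hball : ball c s ⊆ Ω) (hF : ∀ w ∈ ball c s, HasDerivAt F (ω w) w)
      (hy : y ∈ ball c s) (hz : z ∈ ball c s) : ContinuationIncrement Ω ω x z (v + (F z - F y))

namespace ContinuationIncrement

variable {Ω : Set ℂ} {ω : ℂ → ℂ} {x y z v w : ℂ}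

lemma of_ball {c : ℂ} {s : ℝ} {F : ℂ → ℂ} (hball : ball c s ⊆ Ω)
    (hF : ∀ u ∈ ball c s, HasDerivAt F (ω u) u) (hx : x ∈ ball c s) (hy : y ∈ ball c s) :
    ContinuationIncrement Ω ω x y (F y - F x) := by
  simpa using refl.tail hball hF hx hy

lemma trans (hxy : ContinuationIncrement Ω ω x y v) (hyz : ContinuationIncrement Ω ω y z w) :
    ContinuationIncrement Ω ω x z (v + w) := by
  induction hyz with
  | refl => simpa using hxy
  | tail _ hball hF hp hq ih => simpa only [add_assoc] using ih.tail hball hF hp hq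

lemma symm (h : ContinuationIncrement Ω ω x y v) : ContinuationIncrement Ω ω y x (-v) := by
  induction h with
  | refl => simpa using refl
  | tail _ hball hF hp hq ih => simpa using (of_ball hball hF hq hp).trans ih

lemma exists_of_isPreconnected (hΩ : IsOpen Ω) (hΩc : IsPreconnected Ω)
    (hω : DifferentiableOn ℂ ω Ω) (hx : x ∈ Ω) (hy : y ∈ Ω) :
    ∃ v, ContinuationIncrement Ω ω x y v := by
  refine hΩc.induction₂ (fun x y => ∃ v, ContinuationIncrement Ω ω x y v) (fun x hx => ?_)
    (fun _ _ _ _ _ _ ⟨v, hv⟩ ⟨w, hw⟩ => ⟨v + w, hv.trans hw⟩)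
    (fun _ _ _ _ ⟨v, hv⟩ => ⟨-v, hv.symm⟩) hx hy
  obtain ⟨s, hs, hball⟩ := Metric.isOpen_iff.mp hΩ x hx
  obtain ⟨F, hF⟩ := (hω.mono hball).isExactOn_ball
  filter_upwards [mem_nhdsWithin_of_mem_nhds (ball_mem_nhds x hs)] with y hy
  exact ⟨F y - F x, of_ball hball hF (mem_ball_self hs) hy⟩

lemma of_path (hΩ : IsOpen Ω) (hω : DifferentiableOn ℂ ω Ω) {γ γ' Φ : ℝ → ℂ}
    (hγ : ∀ t, HasDerivAt γ (γ' t) t) (hγΩ : ∀ t, γ t ∈ Ω)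
    (hΦ : ∀ t, HasDerivAt Φ (ω (γ t) * γ' t) t) (a b : ℝ) :
    ContinuationIncrement Ω ω (γ a) (γ b) (Φ b - Φ a) := by
  refine isPreconnected_univ.induction₂
    (fun a b => ContinuationIncrement Ω ω (γ a) (γ b) (Φ b - Φ a)) (fun t _ => ?_)
    (fun _ _ _ _ _ _ h₁ h₂ => by simpa using h₁.trans h₂)
    (fun _ _ _ _ h => by simpa using h.symm) (mem_univ a) (mem_univ b)
  obtain ⟨s, hs, hball⟩ := Metric.isOpen_iff.mp hΩ (γ t) (hγΩ t)
  obtain ⟨F, hFt, hF⟩ := (hω.mono hball).isExactOn_ball.with_val_at (γ t) (Φ t)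
  have hmem : ∀ᶠ u in 𝓝 t, γ u ∈ ball (γ t) s :=
    (hγ t).continuousAt.eventually (ball_mem_nhds _ hs)
  have hFγ : F ∘ γ =ᶠ[𝓝 t] Φ := eventuallyEq_of_hasDerivAt_eq
    (hmem.mono fun u hu => (hF (γ u) hu).comp_of_eq u (hγ u) rfl) (.of_forall hΦ) hFt
  rw [nhdsWithin_univ]
  filter_upwards [hmem, hFγ] with u hu hFu
  rw [← hFu, ← hFt]
  exact of_ball hball hF (mem_ball_self hs) hu

end ContinuationIncrement

/-- The periods of `ω` over `x`: the amounts by which the determinations at `x` of a primitive of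
`ω`, continued along closed chains of disks in `Ω`, can differ. -/
def continuationPeriods (Ω : Set ℂ) (ω : ℂ → ℂ) (x : ℂ) : AddSubgroup ℂ where
  carrier := {c | ContinuationIncrement Ω ω x x c}
  zero_mem' := .refl
  add_mem' := .trans
  neg_mem' := .symm

lemma mem_continuationPeriods {Ω : Set ℂ} {ω : ℂ → ℂ} {x c : ℂ} :
    c ∈ continuationPeriods Ω ω x ↔ ContinuationIncrement Ω ω x x c :=
  Iff.rfl

lemma continuationPeriods_eq_of_isPreconnected {Ω : Set ℂ} {ω : ℂ → ℂ} (hΩ : IsOpen Ω)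
    (hΩc : IsPreconnected Ω) (hω : DifferentiableOn ℂ ω Ω) {x y : ℂ} (hx : x ∈ Ω) (hy : y ∈ Ω) :
    continuationPeriods Ω ω x = continuationPeriods Ω ω y := by
  obtain ⟨v, hv⟩ := ContinuationIncrement.exists_of_isPreconnected hΩ hΩc hω hx hy
  ext c
  simp only [mem_continuationPeriods]
  constructor
  · intro h
    simpa using (hv.symm.trans h).trans hv
  · intro h
    simpa using (hv.trans h).trans hv.symm

namespace ContinuationGerm

variable {Ω : Set ℂ} {ω f : ℂ → ℂ}

lemma of_ball {x : ℂ} {r : ℝ} (hr : 0 < r) (hball : ball x r ⊆ Ω)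
    (hf : DifferentiableOn ℂ f (ball x r)) : ContinuationGerm Ω f (ball x r) x f :=
  ⟨0, fun _ => ball x r, fun _ => f, rfl, fun _ _ => rfl, fun _ => ⟨⟨x, r, hr, rfl⟩, hball, hf⟩,
    fun k => k.elim0, mem_ball_self hr, rfl⟩

lemma extend_s16 {D₀ : Set ℂ} {G : ℂ → ℂ} {y z c : ℂ} {s : ℝ}
    (h : ContinuationGerm Ω f D₀ y G) (hball : ball c s ⊆ Ω)
    (hG : DifferentiableOn ℂ G (ball c s)) (hy : y ∈ ball c s) (hz : z ∈ ball c s) :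
    ContinuationGerm Ω f D₀ z G := by
  obtain ⟨n, D, F, hD₀, hF₀, hdisk, hchain, hyD, hGF⟩ := h
  obtain ⟨⟨c', s', hs', hDn⟩, -, hFn⟩ := hdisk (Fin.last n)
  have hglue : EqOn (F (Fin.last n)) G (D (Fin.last n) ∩ ball c s) := by
    rw [hDn] at hyD hFn ⊢
    have hopen : IsOpen (ball c' s' ∩ ball c s) := isOpen_ball.inter isOpen_ball
    exact ((hFn.mono inter_subset_left).analyticOnNhd hopen).eqOn_of_preconnected_of_eventuallyEq
      ((hG.mono inter_subset_right).analyticOnNhd hopen)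
      ((convex_ball c' s').inter (convex_ball c s)).isPreconnected ⟨hyD, hy⟩
      (Filter.Germ.coe_eq.mp hGF).symm
  refine ⟨n + 1, Fin.snoc (α := fun _ => Set ℂ) D (ball c s),
    Fin.snoc (α := fun _ => ℂ → ℂ) F G, ?_, ?_, fun k => ?_, fun k => ?_, ?_, ?_⟩
  · rwa [Fin.snoc_apply_zero]
  · rwa [Fin.snoc_apply_zero]
  · cases k using Fin.lastCases with
    | last => simpa using ⟨⟨c, s, pos_of_mem_ball hy, rfl⟩, hball, hG⟩
    | cast k => simpa using hdisk k
  · cases k using Fin.lastCases with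
    | last =>
      simp only [Fin.succ_last, Fin.snoc_last, Fin.snoc_castSucc]
      exact ⟨⟨y, hyD, hy⟩, hglue⟩
    | cast k =>
      simp only [Fin.succ_castSucc, Fin.snoc_castSucc]
      exact hchain k
  · simpa only [Fin.snoc_last] using hz
  · simp only [Fin.snoc_last]

lemma of_continuationIncrement {x y v : ℂ} {r : ℝ} (hr : 0 < r) (hball : ball x r ⊆ Ω)
    (hf : ∀ z ∈ ball x r, HasDerivAt f (ω z) z) (h : ContinuationIncrement Ω ω x y v) {F : ℂ → ℂ}
    (hF : ∀ᶠ z in 𝓝 y, HasDerivAt F (ω z) z)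
    (hFy : F y = f x + v) : ContinuationGerm Ω f (ball x r) y F := by
  induction h generalizing F with
  | refl =>
    have hFf : F =ᶠ[𝓝 x] f := eventuallyEq_of_hasDerivAt_eq hF
      (eventually_of_mem (ball_mem_nhds x hr) hf) (by simpa using hFy)
    rw [Germ.coe_eq.mpr hFf]
    exact of_ball hr hball fun z hz => (hf z hz).differentiableAt.differentiableWithinAt
  | @tail p q v c s G _ hcs hG hp hq ih =>
    obtain ⟨P, hPp, hP⟩ := Complex.IsExactOn.with_val_at ⟨G, hG⟩ p (f x + v)
    have hPq : P q = F q := by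
      have hsub := sub_eq_sub_of_hasDerivAt_eq isOpen_ball isPreconnected_ball
        hP hG hp hq
      rw [hFy, ← add_assoc, ← hPp, ← hsub, add_sub_cancel]
    have hFP : F =ᶠ[𝓝 q] P := eventuallyEq_of_hasDerivAt_eq hF
      (eventually_of_mem (isOpen_ball.mem_nhds hq) hP) hPq.symm
    rw [Germ.coe_eq.mpr hFP]
    exact (ih (eventually_of_mem (isOpen_ball.mem_nhds hp) hP) hPp).extend_s16 hcs
      (fun z hz => (hP z hz).differentiableAt.differentiableWithinAt) hp hq

lemma exists_primitive (hω : DifferentiableOn ℂ ω Ω) {x y : ℂ} {r : ℝ} (hr : 0 < r)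
    (hf : ∀ z ∈ ball x r, HasDerivAt f (ω z) z) {g : Germ (𝓝 y) ℂ}
    (h : ContinuationGerm Ω f (ball x r) y g) :
    ∃ F : ℂ → ℂ, g = F ∧ (∀ᶠ z in 𝓝 y, HasDerivAt F (ω z) z) ∧
      ContinuationIncrement Ω ω x y (F y - f x) := by
  obtain ⟨n, D, F, hD₀, hF₀, hdisk, hchain, hyD, rfl⟩ := h
  have hopen (k) : IsOpen (D k) := by
    obtain ⟨⟨c, s, -, hDk⟩, -⟩ := hdisk k
    exact hDk ▸ isOpen_ball
  have hprim (k) : (∀ z ∈ D k, HasDerivAt (F k) (ω z) z) ∧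
      ∀ z ∈ D k, ContinuationIncrement Ω ω x z (F k z - f x) := by
    induction k using Fin.induction with
    | zero =>
      have hF₀' : ∀ z ∈ ball x r, HasDerivAt (F 0) (ω z) z := fun z hz =>
        (hf z hz).congr_of_eventuallyEq (hF₀.eventuallyEq_of_mem (isOpen_ball.mem_nhds hz))
      rw [hD₀, ← hF₀ (mem_ball_self hr)]
      exact ⟨hF₀', fun z hz => .of_ball (hD₀ ▸ (hdisk 0).2.1) hF₀' (mem_ball_self hr) hz⟩
    | succ k ih =>
      obtain ⟨⟨p, hp, hp'⟩, hglue⟩ := hchain k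
      obtain ⟨⟨c, s, -, hDk⟩, hsub, hdiff⟩ := hdisk k.succ
      have hnear : ∀ᶠ z in 𝓝 p, HasDerivAt (F k.succ) (ω z) z := by
        have hinter := (hopen k.castSucc).inter (hopen k.succ)
        filter_upwards [hinter.mem_nhds ⟨hp, hp'⟩] with z hz
        exact (ih.1 z hz.1).congr_of_eventuallyEq
          (hglue.symm.eventuallyEq_of_mem (hinter.mem_nhds hz))
      have hFk : ∀ z ∈ D k.succ, HasDerivAt (F k.succ) (ω z) z :=
        hasDerivAt_of_eventually_hasDerivAt (hopen _)
          (hDk ▸ isPreconnected_ball) (hω.mono hsub) hdiff hp' hnear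
      refine ⟨hFk, fun z hz => ?_⟩
      have hstep := ih.2 p hp
      rw [hglue ⟨hp, hp'⟩] at hstep
      rw [hDk] at hsub hFk hp' hz
      simpa using hstep.tail hsub hFk hp' hz
  exact ⟨F (Fin.last n), rfl,
    eventually_of_mem ((hopen _).mem_nhds hyD) (hprim _).1, (hprim _).2 y hyD⟩

end ContinuationGerm

theorem continuationGerm_iff_exists_mem_continuationPeriods {Ω : Set ℂ} {ω f : ℂ → ℂ}
    (hω : DifferentiableOn ℂ ω Ω) {x : ℂ} {r : ℝ} (hr : 0 < r) (hball : ball x r ⊆ Ω)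
    (hf : ∀ z ∈ ball x r, HasDerivAt f (ω z) z) {g : Germ (𝓝 x) ℂ} :
    ContinuationGerm Ω f (ball x r) x g ↔
      ∃ c ∈ continuationPeriods Ω ω x, g = ↑(fun z => f z + c) := by
  have hf_add (c : ℂ) : ∀ᶠ z in 𝓝 x, HasDerivAt (fun z => f z + c) (ω z) z :=
    eventually_of_mem (ball_mem_nhds x hr) fun z hz => (hf z hz).add_const c
  constructor
  · intro hg
    obtain ⟨F, rfl, hF, hincr⟩ := hg.exists_primitive hω hr hf
    exact ⟨F x - f x, hincr,
      Germ.coe_eq.mpr (eventuallyEq_of_hasDerivAt_eq hF (hf_add _) (by ring))⟩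
  · rintro ⟨c, hc, rfl⟩
    exact .of_continuationIncrement hr hball hf hc (hf_add c) rfl

lemma exists_two_pi_I_mul_mem_continuationPeriods {Ω : Set ℂ} {ω h : ℂ → ℂ} {ζ α : ℂ} {R : ℝ}
    (hR : 0 < R) (hΩ : IsOpen Ω) (hω : DifferentiableOn ℂ ω Ω) (hsub : ball ζ R \ {ζ} ⊆ Ω)
    (hh : DifferentiableOn ℂ h (ball ζ R)) (hωh : ∀ z ∈ ball ζ R \ {ζ}, ω z = α / (z - ζ) + h z) :
    ∃ x ∈ Ω, 2 * Real.pi * Complex.I * α ∈ continuationPeriods Ω ω x := by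
  obtain ⟨H, hH⟩ := hh.isExactOn_ball
  have hρ : 0 < R / 2 := half_pos hR
  let γ : ℝ → ℂ := circleMap ζ (R / 2)
  have hγball (t) : γ t ∈ ball ζ R := by
    rw [mem_ball, mem_sphere.mp (circleMap_mem_sphere ζ hρ.le t)]
    exact half_lt_self hR
  have hγζ (t) : γ t - ζ ≠ 0 := sub_ne_zero.mpr (circleMap_ne_center hρ.ne')
  have hγΩ (t) : γ t ∈ ball ζ R \ {ζ} := ⟨hγball t, circleMap_ne_center hρ.ne'⟩
  have hγ (t) : HasDerivAt γ ((γ t - ζ) * Complex.I) t := by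
    simpa only [γ, circleMap_sub_center] using hasDerivAt_circleMap ζ (R / 2) t
  -- Along the circle, `α / (z - ζ)` pulls back to the constant form `α * I`.
  let Φ : ℝ → ℂ := fun t => α * Complex.I * t + H (γ t)
  have hΦ (t) : HasDerivAt Φ (ω (γ t) * ((γ t - ζ) * Complex.I)) t := by
    have hlin : HasDerivAt (fun t : ℝ => α * Complex.I * t) (α * Complex.I) t := by
      simpa using (Complex.ofRealCLM.hasDerivAt (x := t)).const_mul (α * Complex.I)
    convert! hlin.add ((hH (γ t) (hγball t)).comp_of_eq t (hγ t) rfl) using 1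
    rw [hωh _ (hγΩ t)]
    field_simp [hγζ t]
  have hclosed : γ (2 * Real.pi) = γ 0 := by simp [γ, circleMap]
  have hloop := ContinuationIncrement.of_path hΩ hω hγ (fun t => hsub (hγΩ t)) hΦ 0 (2 * Real.pi)
  refine ⟨γ 0, hsub (hγΩ 0), mem_continuationPeriods.mpr ?_⟩
  convert! hloop using 1
  · exact hclosed.symm
  · simp only [Φ, hclosed]
    push_cast
    ring

lemma exp_sub_mul_sub_of_hasDerivAt {U : Set ℂ} (hU : IsOpen U) (hUc : IsPreconnected U)
    {ζ : ℂ} {L : ℂ → ℂ} (hζ : ζ ∉ U) (hL : ∀ z ∈ U, HasDerivAt L (1 / (z - ζ)) z) {x y : ℂ}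
    (hx : x ∈ U) (hy : y ∈ U) : Complex.exp (L y - L x) * (x - ζ) = y - ζ := by
  have hderiv : ∀ z ∈ U, HasDerivAt (fun z => Complex.exp (-L z) * (z - ζ)) 0 z := fun z hz => by
    have hz' : z - ζ ≠ 0 := sub_ne_zero.mpr (ne_of_mem_of_not_mem hz hζ)
    convert! (hL z hz).neg.cexp.mul ((hasDerivAt_id z).sub_const ζ) using 1
    field_simp
    simp
  have hconst := sub_eq_sub_of_hasDerivAt_eq hU hUc hderiv
    (fun z _ => hasDerivAt_const z (0 : ℂ)) hx hy
  rw [sub_self, sub_eq_zero] at hconst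
  calc Complex.exp (L y - L x) * (x - ζ)
      = Complex.exp (L y) * (Complex.exp (-L x) * (x - ζ)) := by
        rw [sub_eq_add_neg, Complex.exp_add, mul_assoc]
    _ = Complex.exp (L y) * (Complex.exp (-L y) * (y - ζ)) := by rw [hconst]
    _ = y - ζ := by rw [← mul_assoc, ← Complex.exp_add, add_neg_cancel, Complex.exp_zero, one_mul]

section SimplePoles

variable {ι : Type*} {ζ α : ι → ℂ}

lemma differentiableOn_sum_div_sub {s : Finset ι} {U : Set ℂ} (hU : ∀ i ∈ s, ζ i ∉ U) :
    DifferentiableOn ℂ (fun z => ∑ i ∈ s, α i / (z - ζ i)) U :=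
  DifferentiableOn.fun_sum fun i hi => (differentiableOn_const _).div
    (differentiableOn_id.sub_const _)
    fun _ hz => sub_ne_zero.mpr (ne_of_mem_of_not_mem hz (hU i hi))

variable [Fintype ι]

lemma ContinuationIncrement.exists_log {x y v : ℂ}
    (h : ContinuationIncrement (range ζ)ᶜ (fun z => ∑ i, α i / (z - ζ i)) x y v) :
    ∃ l : ι → ℂ, (∀ i, Complex.exp (l i) * (x - ζ i) = y - ζ i) ∧ v = ∑ i, α i * l i := by
  induction h with
  | refl => exact ⟨0, by simp, by simp⟩
  | @tail p q v c s F _ hball hF hp hq ih =>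
    obtain ⟨l, hl, rfl⟩ := ih
    have hζ (i) : ζ i ∉ ball c s := fun hi => hball hi (mem_range_self i)
    have hlog (i) : Complex.IsExactOn (fun z => 1 / (z - ζ i)) (ball c s) := by
      refine DifferentiableOn.isExactOn_ball fun z hz => ?_
      have hz' : z - ζ i ≠ 0 := sub_ne_zero.mpr (ne_of_mem_of_not_mem hz (hζ i))
      fun_prop (disch := assumption)
    choose L hL using hlog
    have hsum : ∀ z ∈ ball c s, HasDerivAt (fun z => ∑ i, α i * L i z)
        (∑ i, α i / (z - ζ i)) z := fun z hz => by
      simpa only [mul_one_div] using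
        HasDerivAt.fun_sum fun i (_ : i ∈ Finset.univ) => (hL i z hz).const_mul (α i)
    have hexp (i) : Complex.exp (l i + (L i q - L i p)) * (x - ζ i) = q - ζ i := by
      rw [add_comm, Complex.exp_add, mul_assoc, hl,
        exp_sub_mul_sub_of_hasDerivAt isOpen_ball isPreconnected_ball (hζ i) (hL i) hp hq]
    refine ⟨_, hexp, ?_⟩
    rw [sub_eq_sub_of_hasDerivAt_eq isOpen_ball isPreconnected_ball hF hsum hp hq]
    simp only [mul_add, mul_sub, Finset.sum_add_distrib, Finset.sum_sub_distrib]

lemma two_pi_I_mul_mem_continuationPeriods (hζ : Function.Injective ζ) {x : ℂ}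
    (hx : x ∈ (range ζ)ᶜ) (i : ι) : 2 * Real.pi * Complex.I * α i ∈
      continuationPeriods (range ζ)ᶜ (fun z => ∑ j, α j / (z - ζ j)) x := by
  classical
  have hΩ : IsOpen (range ζ)ᶜ := (finite_range ζ).isClosed.isOpen_compl
  have hΩc : IsPreconnected (range ζ)ᶜ :=
    ((finite_range ζ).countable.isConnected_compl_of_one_lt_rank (by simp)).isPreconnected
  have hω : DifferentiableOn ℂ (fun z => ∑ j, α j / (z - ζ j)) (range ζ)ᶜ :=
    differentiableOn_sum_div_sub fun j _ hj => hj (mem_range_self j)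
  obtain ⟨R, hR, hball⟩ : ∃ R > 0, ball (ζ i) R ⊆ (ζ '' {i}ᶜ)ᶜ :=
    Metric.isOpen_iff.mp (toFinite (ζ '' {i}ᶜ)).isClosed.isOpen_compl (ζ i)
      (by simp [hζ.eq_iff])
  have hsub : ball (ζ i) R \ {ζ i} ⊆ (range ζ)ᶜ := by
    rintro _ ⟨hz, hzi⟩ ⟨j, rfl⟩
    exact hball hz (mem_image_of_mem ζ fun hji => hzi (congrArg ζ hji))
  have hrest : DifferentiableOn ℂ (fun z => ∑ j ∈ Finset.univ.erase i, α j / (z - ζ j))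
      (ball (ζ i) R) :=
    differentiableOn_sum_div_sub fun j hj hjR =>
      hball hjR (mem_image_of_mem ζ (Finset.ne_of_mem_erase hj))
  obtain ⟨y, hy, hperiod⟩ := exists_two_pi_I_mul_mem_continuationPeriods hR hΩ hω hsub hrest
    fun z _ => (Finset.add_sum_erase _ _ (Finset.mem_univ i)).symm
  rwa [continuationPeriods_eq_of_isPreconnected hΩ hΩc hω hx hy]

theorem mem_continuationPeriods_sum_div_sub (hζ : Function.Injective ζ) {x c : ℂ}
    (hx : x ∈ (range ζ)ᶜ) :
    c ∈ continuationPeriods (range ζ)ᶜ (fun z => ∑ i, α i / (z - ζ i)) x ↔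
      ∃ n : ι → ℤ, c = 2 * Real.pi * Complex.I * ∑ i, n i * α i := by
  constructor
  · intro hc
    obtain ⟨l, hl, rfl⟩ := ContinuationIncrement.exists_log hc
    have hexp (i) : Complex.exp (l i) = 1 :=
      (mul_eq_right₀ (sub_ne_zero.mpr fun hxi => hx ⟨i, hxi.symm⟩)).mp (hl i)
    choose n hn using fun i => Complex.exp_eq_one_iff.mp (hexp i)
    refine ⟨n, ?_⟩
    rw [Finset.mul_sum]
    exact Finset.sum_congr rfl fun i _ => by rw [hn i]; ring
  · rintro ⟨n, rfl⟩
    rw [Finset.mul_sum]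
    refine sum_mem fun i _ => ?_
    rw [mul_left_comm, ← zsmul_eq_mul]
    exact zsmul_mem (two_pi_I_mul_mem_continuationPeriods hζ hx i) (n i)

theorem monodromy_three_logs_general (hζ : Function.Injective ζ) {x₀ : ℂ} {r : ℝ} (hr : 0 < r)
    (hD : ball x₀ r ⊆ (range ζ)ᶜ) {f : ℂ → ℂ}
    (hf : ∀ x ∈ ball x₀ r, HasDerivAt f (∑ i, α i / (x - ζ i)) x) :
    {g : Germ (𝓝 x₀) ℂ | ContinuationGerm (range ζ)ᶜ f (ball x₀ r) x₀ g} =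
      {g : Germ (𝓝 x₀) ℂ | ∃ n : ι → ℤ,
        g = ↑(fun x => f x + 2 * Real.pi * Complex.I * ∑ i, n i * α i)} := by
  have hω : DifferentiableOn ℂ (fun z => ∑ i, α i / (z - ζ i)) (range ζ)ᶜ :=
    differentiableOn_sum_div_sub fun i _ hi => hi (mem_range_self i)
  ext g
  rw [mem_ofPred_eq, mem_ofPred_eq,
    continuationGerm_iff_exists_mem_continuationPeriods hω hr hD hf]
  simp only [mem_continuationPeriods_sum_div_sub hζ (hD (mem_ball_self hr))]
  exact ⟨fun ⟨_, ⟨n, hn⟩, hg⟩ => ⟨n, hn ▸ hg⟩, fun ⟨n, hg⟩ => ⟨_, ⟨n, rfl⟩, hg⟩⟩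

end SimplePoles

/-- **Monodromy of `α₁ log(x−ζ₁) + α₂ log(x−ζ₂) + α₃ log(x−ζ₃)`.**
Let `f` be holomorphic on a disk `D₀ ⊆ Ω := ℂ ∖ {ζ₁,ζ₂,ζ₃}` centered at `x₀` with
`f′(x) = α₁/(x−ζ₁) + α₂/(x−ζ₂) + α₃/(x−ζ₃)`.  The germs at `x₀` obtained from `f` by
analytic continuation along chains of disks in `Ω` are exactly the germs of
`f + 2πi(n₁α₁ + n₂α₂ + n₃α₃)`, `n₁, n₂, n₃ ∈ ℤ`: two determinations differ by a constant
in the group `G = 2πi(α₁ℤ + α₂ℤ + α₃ℤ)` and every element of `G` is realized. -/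
theorem monodromy_three_logs (ζ₁ ζ₂ ζ₃ : ℂ)
    (h₁₂ : ζ₁ ≠ ζ₂) (h₁₃ : ζ₁ ≠ ζ₃) (h₂₃ : ζ₂ ≠ ζ₃)
    (α₁ α₂ α₃ : ℂ) (x₀ : ℂ) (hx₀ : x₀ ∈ ({ζ₁, ζ₂, ζ₃}ᶜ : Set ℂ))
    (r : ℝ) (hr : 0 < r) (hD : Metric.ball x₀ r ⊆ ({ζ₁, ζ₂, ζ₃}ᶜ : Set ℂ))
    (f : ℂ → ℂ) (hf : DifferentiableOn ℂ f (Metric.ball x₀ r))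
    (hderiv : ∀ x ∈ Metric.ball x₀ r,
      deriv f x = α₁ / (x - ζ₁) + α₂ / (x - ζ₂) + α₃ / (x - ζ₃)) :
    {g : Filter.Germ (nhds x₀) ℂ |
        ContinuationGerm ({ζ₁, ζ₂, ζ₃}ᶜ) f (Metric.ball x₀ r) x₀ g} =
      {g : Filter.Germ (nhds x₀) ℂ | ∃ n₁ n₂ n₃ : ℤ,
        g = ↑(fun x : ℂ => f x +
          2 * Real.pi * Complex.I * (n₁ * α₁ + n₂ * α₂ + n₃ * α₃))} := by
  have hζ : Function.Injective ![ζ₁, ζ₂, ζ₃] := by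
    simp [Function.Injective, Fin.forall_fin_succ, h₁₂, h₁₃, h₂₃, h₁₂.symm, h₁₃.symm, h₂₃.symm]
  have hrange : ({ζ₁, ζ₂, ζ₃} : Set ℂ) = range ![ζ₁, ζ₂, ζ₃] := by
    simp only [Matrix.range_cons, Matrix.range_empty, union_empty, singleton_union]
  have hf' : ∀ x ∈ ball x₀ r, HasDerivAt f (∑ i, ![α₁, α₂, α₃] i / (x - ![ζ₁, ζ₂, ζ₃] i)) x :=
    fun x hx => by
      simpa [Fin.sum_univ_three, hderiv x hx] using
        (hf.differentiableAt (isOpen_ball.mem_nhds hx)).hasDerivAt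
  rw [hrange] at hD ⊢
  simpa [Fin.sum_univ_three, Fin.exists_fin_succ_pi] using monodromy_three_logs_general hζ hr hD hf'
end

section
/- The map ψ(y) = y + Log(y), where Log denotes the principal branch of the complex logarithm (holomorphic on ℂ ∖ (−∞,0]), is a bijection from ℂ ∖ (−∞,0] onto ℂ ∖ ({z ∈ ℂ : Im z = π and Re z ≤ −1} ∪ {z ∈ ℂ : Im z = −π and Re z ≤ −1}). -/
/-!
In the coordinate `ζ = log y`, the map `ψ` becomes `ζ ↦ ζ + exp ζ` on the strip `|Im ζ| < π`. This
map commutes with complex conjugation and restricts to an increasing bijection of the real line,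
so everything is decided on the half strip `0 < Im ζ < π`. There the level line `Im ψ = b` is
parametrised by the argument `t ∈ (0, min b π)` of `y`, with modulus `r = (b - t) / sin t`, and
along it `Re ψ = r cos t + log r` decreases strictly, its derivative being `-|y + 1|² / (b - t)`
with `Im y = b - t`. As `t` increases, `Re ψ` runs from `+∞` down to `-∞`, except on the line
`b = π`: there `y` tends to the critical point `-1` of `ψ`, and `Re ψ` decreases to `-1` without
attaining it.
-/

namespace Painleve

open Set Filter Topology
open scoped ComplexConjugate

section General

variable {α β : Type*}

lemma bijOn_union_of_disjoint {f : α → β} {s₁ s₂ : Set α} {t₁ t₂ : Set β} (h₁ : BijOn f s₁ t₁)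
    (h₂ : BijOn f s₂ t₂) (ht : Disjoint t₁ t₂) : BijOn f (s₁ ∪ s₂) (t₁ ∪ t₂) := by
  have hs : Disjoint s₁ s₂ := (ht.preimage f).mono h₁.mapsTo h₂.mapsTo
  exact h₁.union h₂ <| (injOn_union hs).2 ⟨h₁.injOn, h₂.injOn, fun x hx y hy =>
    ht.ne_of_mem (h₁.mapsTo hx) (h₂.mapsTo hy)⟩

lemma lt_of_strictAntiOn_Ioo_of_tendsto [LinearOrder α] [DenselyOrdered α] [TopologicalSpace α]
    [OrderTopology α] [Preorder β] [TopologicalSpace β] [ClosedIicTopology β]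
    {f : α → β} {a b : α} {l : β} (hf : StrictAntiOn f (Ioo a b))
    (hl : Tendsto f (𝓝[<] b) (𝓝 l)) {x : α} (hx : x ∈ Ioo a b) : l < f x := by
  obtain ⟨u, hxu, hub⟩ := exists_between hx.2
  have hu : u ∈ Ioo a b := ⟨hx.1.trans hxu, hub⟩
  have : (𝓝[<] b).NeBot := nhdsLT_neBot_of_exists_lt ⟨x, hx.2⟩
  have hlu : l ≤ f u := le_of_tendsto hl <| by
    filter_upwards [Ioo_mem_nhdsLT hub] with v hv
    exact (hf hu ⟨hu.1.trans hv.1, hv.2⟩ hv.1).le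
  exact hlu.trans_lt (hf hx hu hxu)

variable [ConditionallyCompleteLinearOrder α] [DenselyOrdered α] [TopologicalSpace α]
  [OrderTopology α] [LinearOrder β] [TopologicalSpace β] [OrderClosedTopology β]
  {f : α → β} {a b : α}

lemma bijOn_Ioo_Ioi_of_strictAntiOn {l : β} (hab : a < b) (hf : StrictAntiOn f (Ioo a b))
    (hc : ContinuousOn f (Ioo a b)) (ha : Tendsto f (𝓝[>] a) atTop)
    (hb : Tendsto f (𝓝[<] b) (𝓝 l)) : BijOn f (Ioo a b) (Ioi l) := by
  have := nhdsGT_neBot_of_exists_gt ⟨b, hab⟩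
  have := nhdsLT_neBot_of_exists_lt ⟨a, hab⟩
  exact ⟨fun x hx => lt_of_strictAntiOn_Ioo_of_tendsto hf hb hx, hf.injOn,
    isPreconnected_Ioo.intermediate_value_Ioi (le_principal_iff.2 (Ioo_mem_nhdsLT hab))
      (le_principal_iff.2 (Ioo_mem_nhdsGT hab)) hc hb ha⟩

lemma bijOn_Ioo_univ_of_strictAntiOn (hab : a < b) (hf : StrictAntiOn f (Ioo a b))
    (hc : ContinuousOn f (Ioo a b)) (ha : Tendsto f (𝓝[>] a) atTop)
    (hb : Tendsto f (𝓝[<] b) atBot) : BijOn f (Ioo a b) univ := by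
  have := nhdsGT_neBot_of_exists_gt ⟨b, hab⟩
  have := nhdsLT_neBot_of_exists_lt ⟨a, hab⟩
  exact ⟨mapsTo_univ _ _, hf.injOn,
    isPreconnected_Ioo.intermediate_value_Iii (le_principal_iff.2 (Ioo_mem_nhdsLT hab))
      (le_principal_iff.2 (Ioo_mem_nhdsGT hab)) hc hb ha⟩

end General

/-- The modulus of the point `y` of argument `t` on the level line `Im (y + log y) = b`; it is
meaningful for `0 < t < min b π`. -/
noncomputable def levelRadius (b t : ℝ) : ℝ := (b - t) / Real.sin t

/-- The value of `Re (y + log y)` at the point `y` of argument `t` on the level line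
`Im (y + log y) = b`; it is meaningful for `0 < t < min b π`. -/
noncomputable def levelRe (b t : ℝ) : ℝ :=
  levelRadius b t * Real.cos t + Real.log (levelRadius b t)

section LevelLine

variable {b t c : ℝ}

lemma levelRadius_pos (ht : t ∈ Ioo 0 Real.pi) (htb : t < b) : 0 < levelRadius b t :=
  div_pos (sub_pos.2 htb) (Real.sin_pos_of_mem_Ioo ht)

lemma hasDerivAt_levelRe (ht : t ∈ Ioo 0 Real.pi) (htb : t < b) :
    HasDerivAt (levelRe b) (-((levelRadius b t * Real.cos t + 1) ^ 2 / (b - t) + (b - t))) t := by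
  have hsin : 0 < Real.sin t := Real.sin_pos_of_mem_Ioo ht
  have hbt : 0 < b - t := sub_pos.2 htb
  have hradius : HasDerivAt (levelRadius b)
      (((-1) * Real.sin t - (b - t) * Real.cos t) / Real.sin t ^ 2) t :=
    ((hasDerivAt_id t).const_sub b).div (Real.hasDerivAt_sin t) hsin.ne'
  refine ((hradius.mul (Real.hasDerivAt_cos t)).add
    (hradius.log (levelRadius_pos ht htb).ne')).congr_deriv ?_
  unfold levelRadius
  field_simp
  ring

lemma continuousOn_levelRe (b : ℝ) : ContinuousOn (levelRe b) (Ioo 0 (min b Real.pi)) :=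
  fun _ ht => (hasDerivAt_levelRe ⟨ht.1, ht.2.trans_le (min_le_right _ _)⟩
    (ht.2.trans_le (min_le_left _ _))).continuousAt.continuousWithinAt

lemma strictAntiOn_levelRe (b : ℝ) : StrictAntiOn (levelRe b) (Ioo 0 (min b Real.pi)) := by
  refine strictAntiOn_of_deriv_neg (convex_Ioo _ _) (continuousOn_levelRe b) fun t ht => ?_
  rw [interior_Ioo] at ht
  have htb : t < b := ht.2.trans_le (min_le_left _ _)
  rw [(hasDerivAt_levelRe ⟨ht.1, ht.2.trans_le (min_le_right _ _)⟩ htb).deriv, neg_lt_zero]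
  have : 0 < b - t := sub_pos.2 htb
  positivity

lemma tendsto_levelRadius_atTop (hc : Real.sin c = 0) (hcb : c < b) :
    Tendsto (levelRadius b) (𝓝[Ioo 0 Real.pi] c) atTop := by
  have hsin : Tendsto Real.sin (𝓝[Ioo 0 Real.pi] c) (𝓝[>] 0) :=
    tendsto_nhdsWithin_iff.2 ⟨hc ▸ Real.continuous_sin.continuousWithinAt,
      eventually_mem_nhdsWithin.mono fun _ => Real.sin_pos_of_mem_Ioo⟩
  have hsub : Tendsto (fun t => b - t) (𝓝[Ioo 0 Real.pi] c) (𝓝 (b - c)) :=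
    (continuous_const.sub continuous_id).continuousWithinAt
  exact hsub.pos_mul_atTop (sub_pos.2 hcb) (tendsto_inv_nhdsGT_zero.comp hsin)

lemma tendsto_levelRe_zero (hb : 0 < b) : Tendsto (levelRe b) (𝓝[>] 0) atTop := by
  have hradius : Tendsto (levelRadius b) (𝓝[>] 0) atTop := by
    simpa only [nhdsWithin_Ioo_eq_nhdsGT Real.pi_pos] using
      tendsto_levelRadius_atTop Real.sin_zero hb
  have hcos : Tendsto Real.cos (𝓝[>] 0) (𝓝 1) :=
    Real.cos_zero ▸ Real.continuous_cos.continuousWithinAt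
  exact (hradius.atTop_mul_pos one_pos hcos).atTop_add_atTop (Real.tendsto_log_atTop.comp hradius)

lemma tendsto_levelRe_self (hb : b ∈ Ioo 0 Real.pi) : Tendsto (levelRe b) (𝓝[<] b) atBot := by
  have hradius : Tendsto (levelRadius b) (𝓝[<] b) (𝓝[>] 0) := by
    refine tendsto_nhdsWithin_iff.2 ⟨?_, ?_⟩
    · have hcont : ContinuousAt (levelRadius b) b :=
        (continuousAt_const.sub continuousAt_id).div Real.continuous_sin.continuousAt
          (Real.sin_pos_of_mem_Ioo hb).ne'
      simpa only [levelRadius, sub_self, zero_div] using hcont.continuousWithinAt.tendsto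
    · filter_upwards [Ioo_mem_nhdsLT hb.1] with t ht
      exact levelRadius_pos ⟨ht.1, ht.2.trans hb.2⟩ ht.2
  have hcos : Tendsto Real.cos (𝓝[<] b) (𝓝 (Real.cos b)) := Real.continuous_cos.continuousWithinAt
  exact ((tendsto_nhds_of_tendsto_nhdsWithin hradius).mul hcos).add_atBot
    (Real.tendsto_log_nhdsGT_zero.comp hradius)

lemma tendsto_cos_pi : Tendsto Real.cos (𝓝[<] Real.pi) (𝓝 (-1)) :=
  Real.cos_pi ▸ Real.continuous_cos.continuousWithinAt

lemma tendsto_levelRe_pi_atBot (hb : Real.pi < b) : Tendsto (levelRe b) (𝓝[<] Real.pi) atBot := by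
  have hradius : Tendsto (levelRadius b) (𝓝[<] Real.pi) atTop := by
    simpa only [nhdsWithin_Ioo_eq_nhdsLT Real.pi_pos] using
      tendsto_levelRadius_atTop Real.sin_pi hb
  have hlog : Tendsto (fun r : ℝ => Real.log r / r) atTop (𝓝 0) :=
    Real.isLittleO_log_id_atTop.tendsto_div_nhds_zero
  refine (hradius.atTop_mul_neg (by norm_num)
    (tendsto_cos_pi.add (hlog.comp hradius))).congr' ?_
  filter_upwards [hradius.eventually_gt_atTop 0] with t ht
  rw [Function.comp_apply, mul_add, mul_div_cancel₀ _ ht.ne', levelRe]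

lemma tendsto_levelRe_pi_pi : Tendsto (levelRe Real.pi) (𝓝[<] Real.pi) (𝓝 (-1)) := by
  have hradius : Tendsto (levelRadius Real.pi) (𝓝[<] Real.pi) (𝓝 1) := by
    have hslope : Tendsto (slope Real.sin Real.pi) (𝓝[<] Real.pi) (𝓝 (-1)) :=
      Real.cos_pi ▸ (Real.hasDerivAt_sin Real.pi).tendsto_slope.mono_left
        (nhdsWithin_mono _ fun _ ht => ne_of_lt ht)
    have hinv := (hslope.inv₀ (by norm_num)).neg
    rw [inv_neg, inv_one, neg_neg] at hinv
    refine hinv.congr fun t => ?_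
    rw [slope_def_field, Real.sin_pi, levelRadius, inv_div, sub_zero, ← neg_div, neg_sub]
  simpa only [one_mul, Real.log_one, add_zero, levelRe] using!
    (hradius.mul tendsto_cos_pi).add (hradius.log one_ne_zero)

lemma bijOn_levelRe (hb : 0 < b) :
    BijOn (levelRe b) (Ioo 0 (min b Real.pi)) {a | b = Real.pi → -1 < a} := by
  have hpos : 0 < min b Real.pi := lt_min hb Real.pi_pos
  have hanti := strictAntiOn_levelRe b
  have hcont := continuousOn_levelRe b
  have hzero := tendsto_levelRe_zero hb
  rcases eq_or_ne b Real.pi with rfl | hne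
  · convert bijOn_Ioo_Ioi_of_strictAntiOn hpos hanti hcont hzero
      (by simpa only [min_self] using tendsto_levelRe_pi_pi) using 1
    ext a
    simp
  · convert bijOn_Ioo_univ_of_strictAntiOn hpos hanti hcont hzero ?_ using 1
    · simp [hne]
    · rcases hne.lt_or_gt with hlt | hgt
      · simpa only [min_eq_left hlt.le] using tendsto_levelRe_self ⟨hb, hlt⟩
      · simpa only [min_eq_right hgt.le] using tendsto_levelRe_pi_atBot hgt

end LevelLine

/-- The map `y ↦ y + log y` in the coordinate `ζ = log y`. -/
noncomputable def stripMap (ζ : ℂ) : ℂ := ζ + Complex.exp ζ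

section StripMap

variable {ζ w : ℂ}

lemma stripMap_re (ζ : ℂ) : (stripMap ζ).re = ζ.re + Real.exp ζ.re * Real.cos ζ.im := by
  rw [stripMap, Complex.add_re, Complex.exp_re]

lemma stripMap_im (ζ : ℂ) : (stripMap ζ).im = ζ.im + Real.exp ζ.re * Real.sin ζ.im := by
  rw [stripMap, Complex.add_im, Complex.exp_im]

lemma stripMap_conj (ζ : ℂ) : stripMap (conj ζ) = conj (stripMap ζ) := by
  rw [stripMap, stripMap, map_add, Complex.exp_conj]

lemma stripMap_eq_iff (hζ : ζ.im ∈ Ioo 0 Real.pi) :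
    stripMap ζ = w ↔
      ζ.im < w.im ∧ ζ.re = Real.log (levelRadius w.im ζ.im) ∧ levelRe w.im ζ.im = w.re := by
  have hsin : 0 < Real.sin ζ.im := Real.sin_pos_of_mem_Ioo hζ
  constructor
  · rintro rfl
    have hradius : levelRadius (stripMap ζ).im ζ.im = Real.exp ζ.re := by
      rw [levelRadius, stripMap_im, add_sub_cancel_left, mul_div_cancel_right₀ _ hsin.ne']
    refine ⟨?_, by rw [hradius, Real.log_exp], ?_⟩
    · rw [stripMap_im]
      exact lt_add_of_pos_right _ (by positivity)
    · rw [levelRe, hradius, Real.log_exp, stripMap_re, add_comm]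
  · rintro ⟨hlt, hre, hw⟩
    have hexp : Real.exp ζ.re = levelRadius w.im ζ.im := by
      rw [hre, Real.exp_log (levelRadius_pos hζ hlt)]
    refine Complex.ext ?_ ?_
    · rw [stripMap_re, hexp, hre, ← hw, levelRe, add_comm]
    · rw [stripMap_im, hexp, levelRadius, div_mul_cancel₀ _ hsin.ne', add_sub_cancel]

lemma bijOn_stripMap_upper :
    BijOn stripMap {ζ | ζ.im ∈ Ioo 0 Real.pi} {w | 0 < w.im ∧ (w.im = Real.pi → -1 < w.re)} := by
  have hmem {ζ : ℂ} (hζ : ζ.im ∈ Ioo 0 Real.pi) :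
      0 < (stripMap ζ).im ∧ ζ.im ∈ Ioo 0 (min (stripMap ζ).im Real.pi) := by
    have hlt := ((stripMap_eq_iff hζ).1 rfl).1
    exact ⟨hζ.1.trans hlt, hζ.1, lt_min hlt hζ.2⟩
  refine ⟨fun ζ hζ => ?_, fun ζ hζ η hη h => ?_, fun w hw => ?_⟩
  · obtain ⟨-, -, hre⟩ := (stripMap_eq_iff hζ).1 rfl
    obtain ⟨hpos, him⟩ := hmem hζ
    exact ⟨hpos, hre ▸ (bijOn_levelRe hpos).mapsTo him⟩
  · obtain ⟨-, hζre, hζlevel⟩ := (stripMap_eq_iff hζ).1 h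
    obtain ⟨-, hηre, hηlevel⟩ := (stripMap_eq_iff hη).1 rfl
    have him : ζ.im = η.im := (bijOn_levelRe (hmem hη).1).injOn (h ▸ (hmem hζ).2) (hmem hη).2
      (hζlevel.trans hηlevel.symm)
    exact Complex.ext (by rw [hζre, hηre, him]) him
  · obtain ⟨t, ⟨ht, htmin⟩, hlevel⟩ := (bijOn_levelRe hw.1).surjOn hw.2
    obtain ⟨htw, htpi⟩ := lt_min_iff.1 htmin
    exact ⟨⟨Real.log (levelRadius w.im t), t⟩, ⟨ht, htpi⟩,
      (stripMap_eq_iff ⟨ht, htpi⟩).2 ⟨htw, rfl, hlevel⟩⟩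

lemma bijOn_stripMap_lower :
    BijOn stripMap {ζ | ζ.im ∈ Ioo (-Real.pi) 0}
      {w | w.im < 0 ∧ (w.im = -Real.pi → -1 < w.re)} := by
  have hconj {s t : Set ℂ} (h : ∀ ζ, conj ζ ∈ t ↔ ζ ∈ s) : BijOn conj s t :=
    (starRingAut (R := ℂ)).toEquiv.bijOn h
  refine (((hconj fun w => ?_).comp bijOn_stripMap_upper).comp (hconj fun ζ => ?_)).congr ?_
  · simp [neg_eq_iff_eq_neg]
  · simp only [mem_ofPred_eq, Complex.conj_im, mem_Ioo]
    grind
  · intro ζ _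
    simp [stripMap_conj]

lemma bijOn_stripMap_real : BijOn stripMap {ζ | ζ.im = 0} {w | w.im = 0} := by
  have hmono : StrictMono fun x : ℝ => x + Real.exp x := strictMono_id.add Real.exp_strictMono
  have hsurj : Function.Surjective fun x : ℝ => x + Real.exp x :=
    (continuous_id.add Real.continuous_exp).surjective
      (tendsto_id.atTop_add_atTop Real.tendsto_exp_atTop)
      (tendsto_id.atBot_add Real.tendsto_exp_atBot)
  have hre {ζ : ℂ} (hζ : ζ.im = 0) : (stripMap ζ).re = ζ.re + Real.exp ζ.re := by
    rw [stripMap_re, hζ, Real.cos_zero, mul_one]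
  have him {ζ : ℂ} (hζ : ζ.im = 0) : (stripMap ζ).im = 0 := by
    rw [stripMap_im, hζ, Real.sin_zero, mul_zero, add_zero]
  refine ⟨fun ζ => him, fun ζ hζ η hη h => ?_, fun w hw => ?_⟩
  · refine Complex.ext (hmono.injective ?_) (hζ.trans hη.symm)
    simpa only [hre hζ, hre hη] using congrArg Complex.re h
  · obtain ⟨x, hx⟩ := hsurj w.re
    have hx_im : (x : ℂ).im = 0 := Complex.ofReal_im x
    exact ⟨x, hx_im, Complex.ext ((hre hx_im).trans hx) ((him hx_im).trans hw.symm)⟩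

lemma bijOn_stripMap :
    BijOn stripMap {ζ | ζ.im ∈ Ioo (-Real.pi) Real.pi}
      ({w | w.im = Real.pi ∧ w.re ≤ -1} ∪ {w | w.im = -Real.pi ∧ w.re ≤ -1})ᶜ := by
  have hpi := Real.pi_pos
  convert bijOn_union_of_disjoint
    (bijOn_union_of_disjoint bijOn_stripMap_lower bijOn_stripMap_real ?_) bijOn_stripMap_upper ?_
    using 1
  · ext ζ
    simp only [mem_union, mem_ofPred_eq, mem_Ioo]
    grind
  · ext w
    simp only [mem_union, mem_compl_iff, mem_ofPred_eq]
    grind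
  · exact disjoint_left.2 fun w hlower hreal => hlower.1.ne hreal
  · refine disjoint_left.2 fun w hw hupper => ?_
    rcases hw with hlower | hreal
    · exact hlower.1.not_gt hupper.1
    · exact hupper.1.ne' hreal

end StripMap

end Painleve

/-- **The conformal model of the holonomy in Painlevé's example.**
The map `ψ(y) = y + Log y` (with `Log` the principal branch of the complex logarithm) is
a bijection from the slit plane `ℂ ∖ (−∞,0]` onto the complement of the two closed
horizontal half-lines `{Im z = π, Re z ≤ −1}` and `{Im z = −π, Re z ≤ −1}`. -/
theorem psi_bijection :
    Set.BijOn (fun y : ℂ => y + Complex.log y) Complex.slitPlane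
      (({z : ℂ | z.im = Real.pi ∧ z.re ≤ -1} ∪
        {z : ℂ | z.im = -Real.pi ∧ z.re ≤ -1})ᶜ) := by
  have hlog : Set.BijOn Complex.log Complex.slitPlane {ζ | ζ.im ∈ Set.Ioo (-Real.pi) Real.pi} :=
    Complex.expOpenPartialHomeomorph.symm.bijOn
  refine (Painleve.bijOn_stripMap.comp hlog).congr fun y hy => ?_
  rw [Function.comp_apply, Painleve.stripMap, Complex.exp_log (Complex.slitPlane_ne_zero hy),
    add_comm]
end
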